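/- Let n ≥ 2 and p, q > 1. Let μ be a nonzero finite Borel measure on the unit sphere S^{n-1} whose density f with respect to spherical Lebesgue measure (i.e. (n−1)-dimensional Hausdorff measure restricted to S^{n-1}) is even and satisfies 1/M₀ ≤ f(u) ≤ M₀ for all u ∈ S^{n-1}, for some constant M₀ > 0. Then there exists an origin-symmetric convex body K ∈ K_e^n such that 0 < C̃_{p,γ_n,q}(K, S^{n-1}) < ∞ and, for every outer unit normal selection ν for K and every Borel set η ⊆ S^{n-1}, one has μ(η) · C̃_{p,γ_n,q}(K, S^{n-1}) = μ(S^{n-1}) · C̃_{p,γ_n,q}(K, η); that is, μ/|μ| = C̃_{p,γ_n,q}(K,·)/|C̃_{p,γ_n,q}(K,·)|. -/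

import Mathlib

open MeasureTheory Metric Set Filter
open scoped RealInnerProductSpace ENNReal Pointwise Topology

/-- The `L_p` Gaussian dual curvature measure of `K` (with respect to an outer unit normal
selection `ν`), evaluated at the Borel set `η ⊆ Sⁿ⁻¹`:
`C̃_{p,γ_n,q}(K,η) = ∫_{∂K ∩ ν⁻¹(η)} ⟨x, ν x⟩^{1-p} |x|^{q-n} e^{-|x|²/2} dH^{n-1}(x)`. -/
noncomputable def lpGaussDualCurv (n : ℕ) (p q : ℝ) (K : Set (EuclideanSpace ℝ (Fin n)))
    (ν : EuclideanSpace ℝ (Fin n) → EuclideanSpace ℝ (Fin n))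
    (η : Set (EuclideanSpace ℝ (Fin n))) : ℝ≥0∞ :=
  ∫⁻ x in frontier K ∩ ν ⁻¹' η,
    ENNReal.ofReal (⟪x, ν x⟫ ^ (1 - p) * ‖x‖ ^ (q - (n : ℝ)) * Real.exp (-‖x‖ ^ 2 / 2))
    ∂(μH[(n : ℝ) - 1])

set_option linter.all false

namespace GDM

section Cone
open Module
variable {E : Type*} [NormedAddCommGroup E] [InnerProductSpace ℝ E] [FiniteDimensional ℝ E]
  [MeasurableSpace E] [BorelSpace E]

lemma cone_eq (v : E) (b : ℝ) (hb : 0 < b) (A : Set E) (hA : ∀ x ∈ A, ⟪x, v⟫ = b) :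
    Ioo (0 : ℝ) 1 • A = {x | 0 < ⟪x, v⟫ ∧ ⟪x, v⟫ < b ∧ (b / ⟪x, v⟫) • x ∈ A} := by
  ext x
  simp only [Set.mem_smul, mem_Ioo, mem_ofPred_eq]
  constructor
  · rintro ⟨t, ⟨ht0, ht1⟩, y, hy, rfl⟩
    have h := hA y hy
    rw [inner_smul_left, h]
    simp only [conj_trivial]
    refine ⟨by positivity, by nlinarith, ?_⟩
    rw [smul_smul, div_mul_cancel_right₀ hb.ne', inv_mul_cancel₀ ht0.ne', one_smul]
    exact hy
  · rintro ⟨h0, h1, h2⟩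
    refine ⟨⟪x, v⟫ / b, ⟨by positivity, (div_lt_one hb).2 h1⟩, _, h2, ?_⟩
    rw [smul_smul, div_mul_div_cancel₀ hb.ne', div_self h0.ne', one_smul]

lemma lint_pow (d : ℕ) (b : ℝ) (hb : 0 < b) :
    ∫⁻ s in Ioo 0 b, ENNReal.ofReal ((s / b) ^ d) = ENNReal.ofReal (b / (d + 1)) := by
  rw [Measure.restrict_congr_set Ioo_ae_eq_Ioc, ← ofReal_integral_eq_lintegral_ofReal,
    ← intervalIntegral.integral_of_le hb.le]
  · congr 1
    simp_rw [div_pow]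
    rw [intervalIntegral.integral_div, integral_pow]
    field_simp
    simp
    ring
  · have : Continuous fun s : ℝ => (s / b) ^ d := by fun_prop
    exact (this.intervalIntegrable 0 b).1
  · filter_upwards [ae_restrict_mem measurableSet_Ioc] with y hy
    have := hy.1
    simp only [Pi.zero_apply]; positivity

lemma cone_hyperplane (d : ℕ) (hd : finrank ℝ E = d + 1) (v : E) (hv : ‖v‖ = 1) (b : ℝ) (hb : 0 < b)
    (A : Set E) (hA : ∀ x ∈ A, ⟪x, v⟫ = b) (hAm : MeasurableSet A) :
    (volume : Measure E) (Ioo (0 : ℝ) 1 • A) = ENNReal.ofReal (b / (d + 1)) * μHE[d] A := by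
  have hm : MeasurableSet (Ioo (0 : ℝ) 1 • A) := by
    rw [cone_eq v b hb A hA]
    have h1 : Measurable fun x : E => ⟪x, v⟫ := by fun_prop
    have h2 : Measurable fun x : E => (b / ⟪x, v⟫) • x := by fun_prop
    exact (measurableSet_lt measurable_const h1).inter
      ((measurableSet_lt h1 measurable_const).inter (h2 hAm))
  have hv0 : v ≠ 0 := by rintro rfl; simp at hv
  rw [← InnerProductSpace.euclideanHausdorffMeasure_eq_volume,
    EuclideanGeometry.euclideanHausdorffMeasure_eq_lintegral (0 : E) hv0 hm, hd]
  have he : ‖v‖ₑ = 1 := by rw [← ofReal_norm, hv]; simp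
  rw [he, one_mul, Nat.add_sub_cancel]
  have key : ∀ s : ℝ, μHE[d] (Ioo (0 : ℝ) 1 • A ∩
      (AffineSubspace.mk' (s • v +ᵥ (0 : E)) (ℝ ∙ v)ᗮ : Set E)) =
      (Ioo 0 b).indicator (fun s => ENNReal.ofReal ((s / b) ^ d) * μHE[d] A) s := by
    intro s
    have hmem : ∀ y : E, y ∈ (AffineSubspace.mk' (s • v +ᵥ (0 : E)) (ℝ ∙ v)ᗮ : Set E) ↔
        ⟪y, v⟫ = s := by
      intro y
      simp only [SetLike.mem_coe, AffineSubspace.mem_mk', Submodule.mem_orthogonal_singleton_iff_inner_right]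
      simp only [vadd_eq_add, add_zero, vsub_eq_sub, inner_sub_right, inner_smul_right,
        real_inner_self_eq_norm_sq, hv, real_inner_comm]
      constructor <;> intro h <;> linarith
    by_cases hs : s ∈ Ioo 0 b
    · rw [indicator_of_mem hs]
      have hsb : s / b ≠ 0 := (div_pos hs.1 hb).ne'
      have : Ioo (0 : ℝ) 1 • A ∩
        (AffineSubspace.mk' (s • v +ᵥ (0 : E)) (ℝ ∙ v)ᗮ : Set E) = (s / b) • A := by
        ext y
        rw [mem_inter_iff, hmem, cone_eq v b hb A hA, mem_smul_set_iff_inv_smul_mem₀ hsb, inv_div]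
        simp only [mem_ofPred_eq]
        constructor
        · rintro ⟨⟨_, _, h⟩, rfl⟩; exact h
        · intro h
          have h2 := hA _ h
          rw [inner_smul_left] at h2
          simp only [conj_trivial] at h2
          have h3 : ⟪y, v⟫ = s := by
            have := hs.1
            field_simp at h2
            linarith
          rw [h3]; exact ⟨⟨hs.1, hs.2, h⟩, rfl⟩
      rw [this, Measure.euclideanHausdorffMeasure_smul₀ d hsb]
      rw [ENNReal.smul_def, smul_eq_mul]
      congr 1
      rw [← ENNReal.ofReal_coe_nnreal]
      congr 1
      push_cast
      rw [Real.norm_of_nonneg (div_pos hs.1 hb).le]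
    · rw [indicator_of_notMem hs]
      have : Ioo (0 : ℝ) 1 • A ∩
        (AffineSubspace.mk' (s • v +ᵥ (0 : E)) (ℝ ∙ v)ᗮ : Set E) = ∅ := by
        ext y
        rw [mem_inter_iff, hmem, cone_eq v b hb A hA]
        simp only [mem_ofPred_eq, mem_empty_iff_false, iff_false]
        rintro ⟨⟨h0, h1, _⟩, rfl⟩
        exact hs ⟨h0, h1⟩
      rw [this, measure_empty]
  simp_rw [key]
  rw [lintegral_indicator measurableSet_Ioo, lintegral_mul_const _ (by fun_prop), lint_pow d b hb]

end Cone
end GDM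

set_option linter.all false

namespace GDM

section Gauge
open Module
variable {E : Type*} [NormedAddCommGroup E] [InnerProductSpace ℝ E]

/-- The properties of the gauge function of a convex body that are used. -/
structure IsGauge (g : E → ℝ) : Prop where
  hom : ∀ t : ℝ, 0 ≤ t → ∀ x, g (t • x) = t * g x
  lip : ∃ C : NNReal, LipschitzWith C g
  pos : ∃ c : ℝ, 0 < c ∧ ∀ x, c * ‖x‖ ≤ g x

/-- `v` is an outer unit normal at the point `x` of the level set `g = 1`. -/
def IsNormal (g : E → ℝ) (x v : E) : Prop := ‖v‖ = 1 ∧ ∀ y, ⟪y, v⟫ ≤ g y * ⟪x, v⟫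

lemma IsGauge.cont {g : E → ℝ} (hg : IsGauge g) : Continuous g := by
  obtain ⟨C, hC⟩ := hg.lip
  exact hC.continuous

lemma IsGauge.pos_of_ne {g : E → ℝ} (hg : IsGauge g) {x : E} (hx : x ≠ 0) : 0 < g x := by
  obtain ⟨c, hc, h⟩ := hg.pos
  have := norm_pos_iff.2 hx
  exact lt_of_lt_of_le (by positivity) (h x)

lemma IsGauge.zero {g : E → ℝ} (hg : IsGauge g) : g 0 = 0 := by
  simpa using hg.hom 0 le_rfl 0

lemma IsGauge.nonneg {g : E → ℝ} (hg : IsGauge g) (x : E) : 0 ≤ g x := by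
  by_cases hx : x = 0
  · rw [hx, hg.zero]
  · exact (hg.pos_of_ne hx).le

lemma IsNormal.inner_pos {g : E → ℝ} (hg : IsGauge g) {x v : E} (h : IsNormal g x v) :
    0 < ⟪x, v⟫ := by
  have h1 := h.2 v
  rw [real_inner_self_eq_norm_sq, h.1] at h1
  have h2 := hg.nonneg v
  by_contra hcon
  push Not at hcon
  nlinarith

lemma normal_unique {g : E → ℝ} (hg : IsGauge g) {x v w : E} (hx : g x = 1)
    (hd : DifferentiableAt ℝ g x) (hv : IsNormal g x v) (hw : IsNormal g x w) : v = w := by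
  have key : ∀ u, IsNormal g x u → ∀ y, fderiv ℝ g x y * ⟪x, u⟫ = ⟪y, u⟫ := by
    intro u hu y
    have hmin : IsLocalMin (fun y => g y * ⟪x, u⟫ - ⟪y, u⟫) x := by
      refine Filter.Eventually.of_forall fun y => ?_
      simp only [hx, one_mul, sub_self]
      linarith [hu.2 y]
    have hder : HasFDerivAt (fun y => g y * ⟪x, u⟫ - ⟪y, u⟫)
        (⟪x, u⟫ • fderiv ℝ g x - innerSL ℝ u) x := by
      refine (hd.hasFDerivAt.mul_const _).sub ?_
      have := (innerSL ℝ u).hasFDerivAt (x := x)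
      refine this.congr_of_eventuallyEq (Filter.Eventually.of_forall fun y => ?_)
      simp [real_inner_comm]
    have h0 := hmin.hasFDerivAt_eq_zero hder
    have h1 := congrArg (fun L => L y) h0
    simp [real_inner_comm] at h1
    rw [real_inner_comm u y]
    linarith
  have hvp := hv.inner_pos hg
  have hwp := hw.inner_pos hg
  have h3 : ∀ y, ⟪y, ⟪x, w⟫ • v - ⟪x, v⟫ • w⟫ = 0 := by
    intro y
    rw [inner_sub_right, inner_smul_right, inner_smul_right, ← key v hv y, ← key w hw y]
    ring
  have h4 : ⟪x, w⟫ • v = ⟪x, v⟫ • w := by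
    have := h3 (⟪x, w⟫ • v - ⟪x, v⟫ • w)
    rw [inner_self_eq_zero] at this
    exact sub_eq_zero.1 this
  have h5 : ⟪x, w⟫ = ⟪x, v⟫ := by
    have := congrArg norm h4
    rw [norm_smul, norm_smul, hv.1, hw.1, Real.norm_of_nonneg hvp.le, Real.norm_of_nonneg hwp.le] at this
    linarith
  rw [h5] at h4
  exact smul_right_injective E hvp.ne' h4

lemma normal_cont [FiniteDimensional ℝ E] {g : E → ℝ} {x₀ ν₀ : E}
    (hu : ∀ v, IsNormal g x₀ v → v = ν₀) {ε : ℝ} (hε : 0 < ε) :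
    ∀ᶠ x in 𝓝 x₀, ∀ v, IsNormal g x v → ‖v - ν₀‖ < ε := by
  have h : ∀ᶠ x in 𝓝 x₀, ∀ v ∈ sphere (0 : E) 1, (IsNormal g x v → ‖v - ν₀‖ < ε) := by
    refine (isCompact_sphere (0 : E) 1).eventually_forall_of_forall_eventually ?_
    intro v hv
    by_cases hn : IsNormal g x₀ v
    · have := hu v hn
      subst this
      have hc : Tendsto (fun z : E × E => ‖z.2 - v‖) (𝓝 (x₀, v)) (𝓝 0) := by
        have : Continuous fun z : E × E => ‖z.2 - v‖ := by fun_prop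
        simpa using this.tendsto (x₀, v)
      filter_upwards [hc.eventually (gt_mem_nhds hε)] with z hz _ using hz
    · have hv1 : ‖v‖ = 1 := by simpa using hv
      have : ∃ y, g y * ⟪x₀, v⟫ < ⟪y, v⟫ := by
        by_contra hcon
        push Not at hcon
        exact hn ⟨hv1, hcon⟩
      obtain ⟨y, hy⟩ := this
      have h1 : Continuous fun z : E × E => g y * ⟪z.1, z.2⟫ := by fun_prop
      have h2 : Continuous fun z : E × E => ⟪y, z.2⟫ := by fun_prop
      have := (isOpen_lt h1 h2).mem_nhds (show (x₀, v) ∈ _ from hy)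
      filter_upwards [this] with z hz hzn
      exact absurd (hzn.2 y) (not_le.2 hz)
  filter_upwards [h] with x hx v hv
  exact hx v (by simpa using hv.1) hv

/-- central projection to the tangent hyperplane -/
noncomputable def cproj (ν₀ : E) (h₀ : ℝ) (x : E) : E := (h₀ / ⟪x, ν₀⟫) • x

lemma local_chart [FiniteDimensional ℝ E] {g : E → ℝ} (hg : IsGauge g) {ν : E → E}
    (hν : ∀ x, g x = 1 → IsNormal g x (ν x)) {x₀ ν₀ : E} (hx₀ : g x₀ = 1)
    (hn : IsNormal g x₀ ν₀) (hu : ∀ v, IsNormal g x₀ v → v = ν₀) {ε : ℝ} (hε : 0 < ε) :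
    ∃ δ > 0, ∀ x, g x = 1 → x ∈ ball x₀ δ →
      (0 < ⟪x, ν₀⟫ ∧ 1 ≤ ⟪x₀, ν₀⟫ / ⟪x, ν₀⟫ ∧ ⟪x₀, ν₀⟫ / ⟪x, ν₀⟫ ≤ 1 + ε) ∧
      ((1 - ε) * ⟪x₀, ν₀⟫ ≤ ⟪x, ν x⟫ ∧ ⟪x, ν x⟫ ≤ (1 + ε) * ⟪x₀, ν₀⟫) ∧
      ∀ y, g y = 1 → y ∈ ball x₀ δ →
        ‖cproj ν₀ ⟪x₀, ν₀⟫ x - cproj ν₀ ⟪x₀, ν₀⟫ y - (x - y)‖ ≤ ε * ‖x - y‖ := by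
  set h₀ := ⟪x₀, ν₀⟫ with hh₀
  have hpos : 0 < h₀ := hn.inner_pos hg
  set R := ‖x₀‖ + 1 with hR
  have hRpos : 0 < R := by positivity
  -- small parameter
  set e := ε / (1 + 4 * R / h₀) with he
  have hden : 0 < 1 + 4 * R / h₀ := by positivity
  have hepos : 0 < e := by positivity
  have hee : e * (1 + 4 * R / h₀) = ε := by rw [he]; field_simp
  have hele : e ≤ ε := by
    rw [← hee]
    have : 0 ≤ 4 * R / h₀ := by positivity
    nlinarith
  have c1 : Tendsto (fun x => ⟪x, ν₀⟫) (𝓝 x₀) (𝓝 h₀) := by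
    have : Continuous fun x : E => ⟪x, ν₀⟫ := by fun_prop
    exact this.tendsto x₀
  have c2 : Tendsto (fun x => h₀ / ⟪x, ν₀⟫) (𝓝 x₀) (𝓝 1) := by
    have := (tendsto_const_nhds (x := h₀)).div c1 hpos.ne'
    rwa [div_self hpos.ne'] at this
  have ev1 := c1.eventually (lt_mem_nhds (show h₀ / 2 < h₀ by linarith))
  have ev2 := c2.eventually (gt_mem_nhds (show (1 : ℝ) < 1 + e by linarith))
  have ev3 := normal_cont hu hepos
  have ev3' := normal_cont hu (show 0 < ε * h₀ / (2 * R) by positivity)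
  have ev4 : ∀ᶠ x in 𝓝 x₀, ‖x‖ < R := by
    have : Tendsto (fun x : E => ‖x‖) (𝓝 x₀) (𝓝 ‖x₀‖) := continuous_norm.tendsto x₀
    exact this.eventually (gt_mem_nhds (by linarith))
  have ev5 : ∀ᶠ x in 𝓝 x₀, |⟪x, ν₀⟫ - h₀| < ε * h₀ / 2 := by
    have : Tendsto (fun x => |⟪x, ν₀⟫ - h₀|) (𝓝 x₀) (𝓝 0) := by
      simpa using (c1.sub_const h₀).abs
    exact this.eventually (gt_mem_nhds (by positivity))
  obtain ⟨δ, hδ, hball⟩ := Metric.eventually_nhds_iff_ball.1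
    (ev1.and (ev2.and (ev3.and (ev3'.and (ev4.and ev5)))))
  refine ⟨δ, hδ, fun x hgx hx => ?_⟩
  obtain ⟨a1, a2, a3, a3', a4, a5⟩ := hball x hx
  have hxp : 0 < ⟪x, ν₀⟫ := by linarith
  refine ⟨⟨hxp, ?_, by linarith⟩, ?_, ?_⟩
  · rw [le_div_iff₀ hxp, one_mul]
    have := hn.2 x
    rwa [hgx, one_mul] at this
  · have b1 := a3' _ (hν x hgx)
    have b2 : |⟪x, ν x - ν₀⟫| ≤ R * (ε * h₀ / (2 * R)) := by
      refine (abs_real_inner_le_norm _ _).trans ?_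
      gcongr
    have b3 : R * (ε * h₀ / (2 * R)) = ε * h₀ / 2 := by field_simp
    rw [b3, inner_sub_right] at b2
    rw [abs_le] at b2
    rw [abs_lt] at a5
    constructor <;> nlinarith
  · intro y hgy hy
    obtain ⟨d1, d2, d3, d3', d4, d5⟩ := hball y hy
    have hyp : 0 < ⟪y, ν₀⟫ := by linarith
    have hxy : |⟪y - x, ν₀⟫| ≤ e * ‖x - y‖ := by
      have i1 : ⟪y - x, ν x⟫ ≤ 0 := by
        have := (hν x hgx).2 y
        rw [hgy, one_mul] at this
        rw [inner_sub_left]; linarith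
      have i2 : ⟪x - y, ν y⟫ ≤ 0 := by
        have := (hν y hgy).2 x
        rw [hgx, one_mul] at this
        rw [inner_sub_left]; linarith
      have j1 : |⟪y - x, ν x - ν₀⟫| ≤ ‖y - x‖ * e := by
        refine (abs_real_inner_le_norm _ _).trans ?_
        gcongr
        exact (a3 _ (hν x hgx)).le
      have j2 : |⟪x - y, ν y - ν₀⟫| ≤ ‖x - y‖ * e := by
        refine (abs_real_inner_le_norm _ _).trans ?_
        gcongr
        exact (d3 _ (hν y hgy)).le
      rw [norm_sub_rev y x] at j1
      rw [inner_sub_right, abs_le] at j1 j2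
      have k : ⟪x - y, ν₀⟫ = - ⟪y - x, ν₀⟫ := by rw [← inner_neg_left, neg_sub]
      rw [abs_le]
      constructor <;> nlinarith
    have hs : |h₀ / ⟪x, ν₀⟫ - h₀ / ⟪y, ν₀⟫| ≤ 4 / h₀ * (e * ‖x - y‖) := by
      have : h₀ / ⟪x, ν₀⟫ - h₀ / ⟪y, ν₀⟫ = h₀ / (⟪x, ν₀⟫ * ⟪y, ν₀⟫) * ⟪y - x, ν₀⟫ := by
        rw [inner_sub_left]; field_simp
      rw [this, abs_mul]
      gcongr
      rw [abs_of_pos (by positivity), div_le_div_iff₀ (by positivity) hpos]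
      nlinarith [mul_pos (sub_pos.2 a1) (sub_pos.2 d1)]
    have hsplit : cproj ν₀ h₀ x - cproj ν₀ h₀ y - (x - y) =
        (h₀ / ⟪x, ν₀⟫ - 1) • (x - y) + (h₀ / ⟪x, ν₀⟫ - h₀ / ⟪y, ν₀⟫) • y := by
      unfold cproj; module
    have hs1 : |h₀ / ⟪x, ν₀⟫ - 1| ≤ e := by
      have : 1 ≤ h₀ / ⟪x, ν₀⟫ := by
        rw [le_div_iff₀ hxp, one_mul]
        have := hn.2 x
        rwa [hgx, one_mul] at this
      rw [abs_le]; constructor <;> linarith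
    rw [hsplit]
    calc _ ≤ ‖(h₀ / ⟪x, ν₀⟫ - 1) • (x - y)‖ + ‖(h₀ / ⟪x, ν₀⟫ - h₀ / ⟪y, ν₀⟫) • y‖ :=
          norm_add_le _ _
      _ = |h₀ / ⟪x, ν₀⟫ - 1| * ‖x - y‖ + |h₀ / ⟪x, ν₀⟫ - h₀ / ⟪y, ν₀⟫| * ‖y‖ := by
          rw [norm_smul, norm_smul, Real.norm_eq_abs, Real.norm_eq_abs]
      _ ≤ e * ‖x - y‖ + (4 / h₀ * (e * ‖x - y‖)) * R := by gcongr
      _ = e * (1 + 4 * R / h₀) * ‖x - y‖ := by ring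
      _ = ε * ‖x - y‖ := by rw [hee]

end Gauge
end GDM

set_option linter.all false

namespace GDM

section Area
open Module
variable {E : Type*} [NormedAddCommGroup E] [InnerProductSpace ℝ E] [FiniteDimensional ℝ E]
  [MeasurableSpace E] [BorelSpace E]

lemma lipHE {f : E → E} {K : NNReal} {s : Set E} (d : ℕ) (h : LipschitzOnWith K f s) :
    μHE[d] (f '' s) ≤ (K : ℝ≥0∞) ^ d * μHE[d] s := by
  have h1 := h.hausdorffMeasure_image_le (d := (d : ℝ)) (by positivity)
  rw [Measure.euclideanHausdorffMeasure_def, Measure.smul_apply, Measure.smul_apply,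
    ENNReal.smul_def, smul_eq_mul, ENNReal.smul_def, smul_eq_mul, mul_left_comm]
  gcongr
  simpa using h1

lemma cone_eq_gauge {g : E → ℝ} (hg : IsGauge g) (A : Set E) (hA : ∀ x ∈ A, g x = 1) :
    Ioo (0 : ℝ) 1 • A = {x | 0 < g x ∧ g x < 1 ∧ (g x)⁻¹ • x ∈ A} := by
  ext x
  simp only [Set.mem_smul, mem_Ioo, mem_ofPred_eq]
  constructor
  · rintro ⟨t, ⟨ht0, ht1⟩, y, hy, rfl⟩
    rw [hg.hom t ht0.le, hA y hy, mul_one]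
    refine ⟨ht0, ht1, ?_⟩
    rwa [smul_smul, inv_mul_cancel₀ ht0.ne', one_smul]
  · rintro ⟨h0, h1, h2⟩
    refine ⟨g x, ⟨h0, h1⟩, _, h2, ?_⟩
    rw [smul_smul, mul_inv_cancel₀ h0.ne', one_smul]

/-- The cone measure on the level set `g = 1`. -/
noncomputable def coneM (g : E → ℝ) (d : ℕ) : Measure E :=
  ((d : ℝ≥0∞) + 1) • ((volume : Measure E).restrict {x | 0 < g x ∧ g x < 1}).map
    (fun x => (g x)⁻¹ • x)

lemma meas_retr {g : E → ℝ} (hg : IsGauge g) : Measurable (fun x => (g x)⁻¹ • x) := by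
  have := hg.cont.measurable
  fun_prop

lemma coneM_apply {g : E → ℝ} (hg : IsGauge g) (d : ℕ) {A : Set E} (hA : MeasurableSet A)
    (hA1 : ∀ x ∈ A, g x = 1) : coneM g d A = ((d : ℝ≥0∞) + 1) * volume (Ioo (0 : ℝ) 1 • A) := by
  have hm := hg.cont.measurable
  rw [coneM, Measure.smul_apply, smul_eq_mul, Measure.map_apply (meas_retr hg) hA,
    Measure.restrict_apply (meas_retr hg hA), cone_eq_gauge hg A hA1]
  congr 2
  ext x
  simp only [mem_inter_iff, mem_preimage, mem_ofPred_eq]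
  tauto

lemma coneM_compl {g : E → ℝ} (hg : IsGauge g) (d : ℕ) : coneM g d {x | g x = 1}ᶜ = 0 := by
  have hm := hg.cont.measurable
  have h1 : MeasurableSet {x | g x = 1}ᶜ := (measurableSet_eq_fun hm measurable_const).compl
  rw [coneM, Measure.smul_apply, smul_eq_mul, Measure.map_apply (meas_retr hg) h1,
    Measure.restrict_apply (meas_retr hg h1)]
  have : (fun x => (g x)⁻¹ • x) ⁻¹' {x | g x = 1}ᶜ ∩ {x | 0 < g x ∧ g x < 1} = ∅ := by
    ext x
    simp only [mem_inter_iff, mem_preimage, mem_compl_iff, mem_ofPred_eq, mem_empty_iff_false,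
      iff_false, not_and]
    intro h h0 _
    apply h
    rw [hg.hom _ (inv_nonneg.2 h0.le), inv_mul_cancel₀ h0.ne']
  rw [this]; simp

lemma glue (m1 m2 : Measure E) (D N : Set E) (hD : MeasurableSet D) (θ : ℝ≥0∞)
    (h : ∀ x ∈ D \ N, ∃ U, IsOpen U ∧ x ∈ U ∧
      ∀ A, MeasurableSet A → A ⊆ U ∩ D → m1 A ≤ θ * m2 A)
    (hN : m1 N = 0) {A : Set E} (hA : MeasurableSet A) (hAD : A ⊆ D) : m1 A ≤ θ * m2 A := by
  choose! U hUo hUx hU using h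
  obtain ⟨T, hT, hTU⟩ := TopologicalSpace.isOpen_iUnion_countable
    (fun x : ↥(D \ N) => U x) (fun x => hUo x x.2)
  have hcov : A ⊆ N ∪ ⋃ i ∈ T, U i := by
    intro x hx
    by_cases hxN : x ∈ N
    · exact Or.inl hxN
    · right
      rw [hTU]
      exact mem_iUnion.2 ⟨⟨x, hAD hx, hxN⟩, hUx x ⟨hAD hx, hxN⟩⟩
  rcases T.eq_empty_or_nonempty with hTe | hTn
  · rw [hTe] at hcov
    have : m1 A = 0 := measure_mono_null (by simpa using hcov) hN
    rw [this]; exact bot_le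
  · obtain ⟨f, rfl⟩ := hT.exists_eq_range hTn
    rw [biUnion_range] at hcov
    set V : ℕ → Set E := disjointed (fun i => U (f i)) with hV
    have hVm : ∀ i, MeasurableSet (V i) := fun i =>
      MeasurableSet.disjointed (fun j => (hUo _ (f j).2).measurableSet) i
    have hVU : ∀ i, V i ⊆ U (f i) := fun i => disjointed_subset _ i
    have hVun : ⋃ i, V i = ⋃ i, U (f i) := iUnion_disjointed
    have hVd : Pairwise (Function.onFun Disjoint V) := disjoint_disjointed _
    have e1 : A ⊆ N ∪ ⋃ i, (A ∩ V i) := by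
      intro x hx
      rcases hcov hx with h | h
      · exact Or.inl h
      · right
        rw [← inter_iUnion, hVun]
        exact ⟨hx, h⟩
    calc m1 A ≤ m1 (N ∪ ⋃ i, (A ∩ V i)) := measure_mono e1
      _ ≤ m1 N + m1 (⋃ i, (A ∩ V i)) := measure_union_le _ _
      _ = m1 (⋃ i, (A ∩ V i)) := by rw [hN, zero_add]
      _ ≤ ∑' i, m1 (A ∩ V i) := measure_iUnion_le _
      _ ≤ ∑' i, θ * m2 (A ∩ V i) := by
          refine ENNReal.tsum_le_tsum fun i => ?_
          exact hU _ (f i).2 _ (hA.inter (hVm i))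
            (fun x hx => ⟨hVU i hx.2, hAD hx.1⟩)
      _ = θ * m2 (⋃ i, (A ∩ V i)) := by
          rw [ENNReal.tsum_mul_left, measure_iUnion]
          · intro i j hij
            exact (hVd hij).mono inter_subset_right inter_subset_right
          · exact fun i => hA.inter (hVm i)
      _ ≤ θ * m2 A := by
          gcongr
          exact iUnion_subset fun i => inter_subset_left

lemma diff_smul {g : E → ℝ} (hg : IsGauge g) {t : ℝ} (ht : 0 < t) {x : E}
    (h : DifferentiableAt ℝ g (t • x)) : DifferentiableAt ℝ g x := by
  have h1 : g = fun y => t⁻¹ * g (t • y) := by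
    funext y
    rw [hg.hom t ht.le, inv_mul_cancel_left₀ ht.ne']
  rw [h1]
  exact (h.comp x (by fun_prop : DifferentiableAt ℝ (fun y : E => t • y) x)).const_mul _

lemma nondiff_null {g : E → ℝ} (hg : IsGauge g) :
    (volume : Measure E) {x | ¬ DifferentiableAt ℝ g x} = 0 := by
  obtain ⟨C, hC⟩ := hg.lip
  exact hC.ae_differentiableAt (μ := volume)

lemma meas_nondiff (g : E → ℝ) : MeasurableSet {x | ¬ DifferentiableAt ℝ g x} :=
  (measurableSet_of_differentiableAt ℝ g).compl

lemma cone_nondiff {g : E → ℝ} (hg : IsGauge g) {A : Set E}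
    (hA : ∀ x ∈ A, ¬ DifferentiableAt ℝ g x) : (volume : Measure E) (Ioo (0 : ℝ) 1 • A) = 0 := by
  refine measure_mono_null ?_ (nondiff_null hg)
  rintro _ ⟨t, ht, y, hy, rfl⟩
  exact fun h => hA y hy (diff_smul hg ht.1 h)

lemma HE_null {g : E → ℝ} (hg : IsGauge g) (d : ℕ) (hd : finrank ℝ E = d + 1) :
    μHE[d] {x | g x = 1 ∧ ¬ DifferentiableAt ℝ g x} = 0 := by
  obtain ⟨C, hC⟩ := hg.lip
  obtain ⟨c, hc, hpos⟩ := hg.pos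
  -- half space version
  have key : ∀ v : E, ‖v‖ = 1 →
      μHE[d] {x | 0 < ⟪x, v⟫ ∧ g x = 1 ∧ ¬ DifferentiableAt ℝ g x} = 0 := by
    intro v hv
    set B : ℕ → Set E := fun k => {y | ⟪y, v⟫ = 1 ∧ ‖y‖ ≤ k ∧ ¬ DifferentiableAt ℝ g y} with hB
    have hBm : ∀ k, MeasurableSet (B k) := fun k => by
      have h1 : Measurable fun y : E => ⟪y, v⟫ := by fun_prop
      exact (measurableSet_eq_fun h1 measurable_const).inter
        ((measurableSet_le measurable_norm measurable_const).inter (meas_nondiff g))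
    have hB0 : ∀ k, μHE[d] (B k) = 0 := by
      intro k
      have h1 := cone_hyperplane d hd v hv 1 one_pos (B k) (fun x hx => hx.1) (hBm k)
      rw [cone_nondiff hg (fun x hx => hx.2.2)] at h1
      have h2 := mul_eq_zero.1 h1.symm
      rcases h2 with h2 | h2
      · rw [ENNReal.ofReal_eq_zero] at h2
        have : (0 : ℝ) < 1 / (d + 1) := by positivity
        linarith
      · exact h2
    have hgB : ∀ k, ∀ y ∈ B k, c ≤ g y := by
      intro k y hy
      have h1 : 1 ≤ ‖y‖ := by
        have := real_inner_le_norm y v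
        rw [hy.1, hv, mul_one] at this
        exact this
      nlinarith [hpos y]
    have hlip : ∀ k, ∃ K : NNReal, LipschitzOnWith K (fun y => (g y)⁻¹ • y) (B k) := by
      intro k
      refine ⟨Real.toNNReal (c⁻¹ + k * C / (c * c)), LipschitzOnWith.of_dist_le_mul ?_⟩
      intro x hx y hy
      rw [Real.coe_toNNReal _ (by positivity), dist_eq_norm, dist_eq_norm]
      have gx := hgB k x hx
      have gy := hgB k y hy
      have gx0 : 0 < g x := by linarith
      have gy0 : 0 < g y := by linarith
      have e : (g x)⁻¹ • x - (g y)⁻¹ • y = (g x)⁻¹ • (x - y) + ((g x)⁻¹ - (g y)⁻¹) • y := by module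
      have e2 : (g x)⁻¹ - (g y)⁻¹ = (g y - g x) / (g x * g y) := by field_simp
      have e3 : |g y - g x| ≤ C * ‖x - y‖ := by
        have := hC.dist_le_mul y x
        rwa [Real.dist_eq, dist_eq_norm, norm_sub_rev] at this
      rw [e]
      calc _ ≤ ‖(g x)⁻¹ • (x - y)‖ + ‖((g x)⁻¹ - (g y)⁻¹) • y‖ := norm_add_le _ _
        _ = (g x)⁻¹ * ‖x - y‖ + |g y - g x| / (g x * g y) * ‖y‖ := by
            rw [norm_smul, norm_smul, e2, Real.norm_of_nonneg (inv_pos.2 gx0).le, norm_div,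
              Real.norm_eq_abs, Real.norm_of_nonneg (mul_pos gx0 gy0).le]
        _ ≤ c⁻¹ * ‖x - y‖ + (C * ‖x - y‖) / (c * c) * k := by
            gcongr
            exact hy.2.1
        _ = _ := by ring
    refine measure_mono_null (t := ⋃ k, (fun y => (g y)⁻¹ • y) '' B k) ?_ ?_
    · rintro x ⟨h0, h1, h2⟩
      obtain ⟨k, hk⟩ := exists_nat_ge ‖(⟪x, v⟫)⁻¹ • x‖
      refine mem_iUnion.2 ⟨k, (⟪x, v⟫)⁻¹ • x, ⟨?_, hk, ?_⟩, ?_⟩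
      · rw [inner_smul_left]; simp [h0.ne']
      · exact fun h => h2 (diff_smul hg (inv_pos.2 h0) h)
      · simp only
        rw [hg.hom _ (inv_pos.2 h0).le, h1, mul_one, inv_inv, smul_smul, mul_inv_cancel₀ h0.ne',
          one_smul]
    · rw [measure_iUnion_null_iff]
      intro k
      obtain ⟨K, hK⟩ := hlip k
      have := lipHE d hK
      rw [hB0 k, mul_zero] at this
      exact le_antisymm this bot_le
  refine measure_null_of_locally_null _ fun x hx => ?_
  have hx0 : x ≠ 0 := by
    rintro rfl
    have := hx.1
    rw [hg.zero] at this
    norm_num at this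
  have hxn : 0 < ‖x‖ := norm_pos_iff.2 hx0
  refine ⟨_, ?_, key (‖x‖⁻¹ • x) (by rw [norm_smul]; simp [hx0])⟩
  have h1 : Continuous fun y : E => ⟪y, ‖x‖⁻¹ • x⟫ := by fun_prop
  have h2 : {y : E | 0 < ⟪y, ‖x‖⁻¹ • x⟫} ∈ 𝓝 x := by
    refine (isOpen_lt continuous_const h1).mem_nhds ?_
    show 0 < ⟪x, ‖x‖⁻¹ • x⟫
    rw [inner_smul_right, real_inner_self_eq_norm_sq]
    positivity
  filter_upwards [mem_nhdsWithin_of_mem_nhds h2, self_mem_nhdsWithin] with y hy1 hy2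
  exact ⟨hy1, hy2⟩

end Area
end GDM

set_option linter.all false

namespace GDM

section Area
open Module
variable {E : Type*} [NormedAddCommGroup E] [InnerProductSpace ℝ E] [FiniteDimensional ℝ E]
  [MeasurableSpace E] [BorelSpace E]

lemma area_local {g : E → ℝ} (hg : IsGauge g) (d : ℕ) (hd : finrank ℝ E = d + 1) {ν : E → E}
    (hν : ∀ x, g x = 1 → IsNormal g x (ν x)) (hνm : Measurable ν) {x₀ : E} (hx₀ : g x₀ = 1)
    (hdiff : DifferentiableAt ℝ g x₀) {s : ℝ} (hs : 1 < s) :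
    ∃ U, IsOpen U ∧ x₀ ∈ U ∧ ∀ A, MeasurableSet A → A ⊆ U ∩ {x | g x = 1} →
      coneM g d A ≤ ENNReal.ofReal s ^ (2 * d + 2) *
        ((μHE[d].restrict {x | g x = 1}).withDensity (fun x => ENNReal.ofReal ⟪x, ν x⟫)) A ∧
      ((μHE[d].restrict {x | g x = 1}).withDensity (fun x => ENNReal.ofReal ⟪x, ν x⟫)) A ≤
        ENNReal.ofReal s ^ (2 * d + 2) * coneM g d A := by
  have hn := hν x₀ hx₀
  set ν₀ := ν x₀ with hν₀
  set h₀ := ⟪x₀, ν₀⟫ with hh₀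
  have h₀pos : 0 < h₀ := hn.inner_pos hg
  have hs0 : 0 < s := by linarith
  set ε := 1 - s⁻¹ with hε
  have hεpos : 0 < ε := by rw [hε, sub_pos]; exact inv_lt_one_of_one_lt₀ hs
  have hε1 : 1 + ε ≤ s := by
    have : s * s⁻¹ = 1 := mul_inv_cancel₀ hs0.ne'
    rw [hε]
    have : 0 < s⁻¹ := by positivity
    nlinarith [sq_nonneg (s - 1)]
  have hε2 : 1 - ε = s⁻¹ := by rw [hε]; ring
  obtain ⟨δ, hδ, H⟩ := local_chart hg hν hx₀ hn
    (fun v hv => normal_unique hg hx₀ hdiff hv hn) hεpos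
  refine ⟨ball x₀ δ, isOpen_ball, mem_ball_self hδ, fun A hA hAU => ?_⟩
  have hA1 : ∀ x ∈ A, g x = 1 := fun x hx => (hAU hx).2
  have H' : ∀ x ∈ A, _ := fun x hx => H x (hAU hx).2 (hAU hx).1
  set P : E → E := cproj ν₀ h₀ with hP
  set S : ℝ≥0∞ := ENNReal.ofReal s with hS
  have hS1 : 1 ≤ S := by rw [hS, ← ENNReal.ofReal_one]; exact ENNReal.ofReal_le_ofReal hs.le
  -- Lipschitz bounds
  have hle : ∀ x ∈ A, ∀ y ∈ A, ‖P x - P y‖ ≤ s * ‖x - y‖ := fun x hx y hy => by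
    have h1 := (H' x hx).2.2 y (hAU hy).2 (hAU hy).1
    have h2 := norm_add_le (P x - P y - (x - y)) (x - y)
    rw [sub_add_cancel] at h2
    nlinarith [norm_nonneg (x - y)]
  have hge : ∀ x ∈ A, ∀ y ∈ A, ‖x - y‖ ≤ s * ‖P x - P y‖ := fun x hx y hy => by
    have h1 := (H' x hx).2.2 y (hAU hy).2 (hAU hy).1
    have h2 := norm_sub_le (P x - P y) (P x - P y - (x - y))
    rw [sub_sub_cancel] at h2
    have h3 : s⁻¹ * ‖x - y‖ ≤ ‖P x - P y‖ := by rw [← hε2]; linarith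
    calc ‖x - y‖ = s * (s⁻¹ * ‖x - y‖) := by rw [mul_inv_cancel_left₀ hs0.ne']
      _ ≤ _ := by gcongr
  have hlip1 : LipschitzOnWith (Real.toNNReal s) P A := by
    refine LipschitzOnWith.of_dist_le_mul fun x hx y hy => ?_
    rw [Real.coe_toNNReal _ hs0.le, dist_eq_norm, dist_eq_norm]
    exact hle x hx y hy
  have hinj : InjOn P A := fun x hx y hy hxy => by
    have := hge x hx y hy
    rw [hxy, sub_self, norm_zero, mul_zero] at this
    exact sub_eq_zero.1 (norm_le_zero_iff.1 this)
  have hPA : MeasurableSet (P '' A) := hA.image_of_continuousOn_injOn hlip1.continuousOn hinj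
  have hlip2 : LipschitzOnWith (Real.toNNReal s) (Function.invFunOn P A) (P '' A) := by
    refine LipschitzOnWith.of_dist_le_mul ?_
    rintro _ ⟨x, hx, rfl⟩ _ ⟨y, hy, rfl⟩
    rw [Real.coe_toNNReal _ hs0.le, dist_eq_norm, dist_eq_norm, hinj.leftInvOn_invFunOn hx,
      hinj.leftInvOn_invFunOn hy]
    exact hge x hx y hy
  have hinvim : Function.invFunOn P A '' (P '' A) = A := by
    rw [hinj.leftInvOn_invFunOn.image_image]
  have HP1 : μHE[d] (P '' A) ≤ S ^ d * μHE[d] A := lipHE d hlip1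
  have HP2 : μHE[d] A ≤ S ^ d * μHE[d] (P '' A) := by
    have := lipHE d hlip2
    rwa [hinvim] at this
  -- the cone over P A
  have hPhyp : ∀ y ∈ P '' A, ⟪y, ν₀⟫ = h₀ := by
    rintro _ ⟨x, hx, rfl⟩
    have := (H' x hx).1.1
    rw [hP, cproj, inner_smul_left]
    simp only [conj_trivial]
    field_simp
  have hcone : ((d : ℝ≥0∞) + 1) * volume (Ioo (0 : ℝ) 1 • (P '' A)) =
      ENNReal.ofReal h₀ * μHE[d] (P '' A) := by
    rw [cone_hyperplane d hd ν₀ hn.1 h₀ h₀pos _ hPhyp hPA, ← mul_assoc]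
    congr 1
    have : ((d : ℝ≥0∞) + 1) = ENNReal.ofReal ((d : ℝ) + 1) := by
      rw [ENNReal.ofReal_add (by positivity) zero_le_one]; simp
    rw [this, ← ENNReal.ofReal_mul (by positivity)]
    congr 1
    field_simp
  have hsub1 : Ioo (0 : ℝ) 1 • A ⊆ Ioo (0 : ℝ) 1 • (P '' A) := by
    rintro _ ⟨t, ht, x, hx, rfl⟩
    obtain ⟨⟨h1, h2, h3⟩, -⟩ := H' x hx
    have hc : 0 < h₀ / ⟪x, ν₀⟫ := by linarith
    refine ⟨t / (h₀ / ⟪x, ν₀⟫), ⟨div_pos ht.1 hc, ?_⟩, P x, mem_image_of_mem _ hx, ?_⟩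
    · rw [div_lt_one hc]; linarith [ht.2]
    · show _ • (_ • x) = t • x
      rw [smul_smul, div_mul_cancel₀ _ hc.ne']
  have hsub2 : Ioo (0 : ℝ) 1 • (P '' A) ⊆ s • (Ioo (0 : ℝ) 1 • A) := by
    rintro _ ⟨t, ht, _, ⟨x, hx, rfl⟩, rfl⟩
    obtain ⟨⟨h1, h2, h3⟩, -⟩ := H' x hx
    have hc : 0 < h₀ / ⟪x, ν₀⟫ := by linarith
    refine ⟨(t * (h₀ / ⟪x, ν₀⟫) / s) • x, ⟨_, ⟨by have := ht.1; positivity, ?_⟩, x, hx, rfl⟩, ?_⟩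
    · rw [div_lt_one hs0]
      nlinarith [ht.1, ht.2]
    · show s • _ = t • (_ • x)
      rw [smul_smul, smul_smul, mul_div_cancel₀ _ hs0.ne']
  have hvol2 : volume (Ioo (0 : ℝ) 1 • (P '' A)) ≤ S ^ (d + 1) * volume (Ioo (0 : ℝ) 1 • A) := by
    refine (measure_mono hsub2).trans ?_
    rw [Measure.addHaar_smul, hd, abs_of_pos (by positivity), ENNReal.ofReal_pow hs0.le]
  -- the density
  have hWA : ((μHE[d].restrict {x | g x = 1}).withDensity (fun x => ENNReal.ofReal ⟪x, ν x⟫)) A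
      = ∫⁻ x in A, ENNReal.ofReal ⟪x, ν x⟫ ∂μHE[d] := by
    rw [withDensity_apply _ hA, Measure.restrict_restrict hA,
      inter_eq_self_of_subset_left (show A ⊆ {x | g x = 1} from fun x hx => hA1 x hx)]
  have hWle : ∫⁻ x in A, ENNReal.ofReal ⟪x, ν x⟫ ∂μHE[d] ≤ S * ENNReal.ofReal h₀ * μHE[d] A := by
    rw [← setLIntegral_const]
    refine setLIntegral_mono' hA fun x hx => ?_
    rw [hS, ← ENNReal.ofReal_mul hs0.le]
    refine ENNReal.ofReal_le_ofReal ?_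
    have := (H' x hx).2.1.2
    nlinarith
  have hWge : ENNReal.ofReal h₀ * μHE[d] A ≤ S * ∫⁻ x in A, ENNReal.ofReal ⟪x, ν x⟫ ∂μHE[d] := by
    have hm : Measurable fun x => ENNReal.ofReal ⟪x, ν x⟫ := by fun_prop
    rw [← setLIntegral_const, ← lintegral_const_mul _ hm]
    refine setLIntegral_mono' hA fun x hx => ?_
    rw [hS, ← ENNReal.ofReal_mul hs0.le]
    refine ENNReal.ofReal_le_ofReal ?_
    have := (H' x hx).2.1.1
    rw [hε2] at this
    calc h₀ = s * (s⁻¹ * h₀) := by rw [mul_inv_cancel_left₀ hs0.ne']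
      _ ≤ _ := by gcongr
  rw [hWA, coneM_apply hg d hA hA1]
  set I := ∫⁻ x in A, ENNReal.ofReal ⟪x, ν x⟫ ∂μHE[d] with hI
  constructor
  · calc ((d : ℝ≥0∞) + 1) * volume (Ioo (0 : ℝ) 1 • A)
        ≤ ((d : ℝ≥0∞) + 1) * volume (Ioo (0 : ℝ) 1 • (P '' A)) := by gcongr
      _ = ENNReal.ofReal h₀ * μHE[d] (P '' A) := hcone
      _ ≤ ENNReal.ofReal h₀ * (S ^ d * μHE[d] A) := by gcongr
      _ = S ^ d * (ENNReal.ofReal h₀ * μHE[d] A) := by ring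
      _ ≤ S ^ d * (S * I) := by gcongr
      _ = S ^ (d + 1) * I := by ring
      _ ≤ _ := by
        have : S ^ (d + 1) ≤ S ^ (2 * d + 2) := pow_le_pow_right₀ hS1 (by omega)
        gcongr
  · calc I ≤ S * ENNReal.ofReal h₀ * μHE[d] A := hWle
      _ ≤ S * ENNReal.ofReal h₀ * (S ^ d * μHE[d] (P '' A)) := by gcongr
      _ = S ^ (d + 1) * (ENNReal.ofReal h₀ * μHE[d] (P '' A)) := by ring
      _ = S ^ (d + 1) * (((d : ℝ≥0∞) + 1) * volume (Ioo (0 : ℝ) 1 • (P '' A))) := by rw [hcone]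
      _ ≤ S ^ (d + 1) * (((d : ℝ≥0∞) + 1) * (S ^ (d + 1) * volume (Ioo (0 : ℝ) 1 • A))) := by
        gcongr
      _ = _ := by ring

theorem area_formula {g : E → ℝ} (hg : IsGauge g) (d : ℕ) (hd : finrank ℝ E = d + 1) {ν : E → E}
    (hν : ∀ x, g x = 1 → IsNormal g x (ν x)) (hνm : Measurable ν) :
    coneM g d =
      (μHE[d].restrict {x | g x = 1}).withDensity (fun x => ENNReal.ofReal ⟪x, ν x⟫) := by
  set W := (μHE[d].restrict {x | g x = 1}).withDensity (fun x => ENNReal.ofReal ⟪x, ν x⟫) with hW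
  have hDm : MeasurableSet {x | g x = 1} := measurableSet_eq_fun hg.cont.measurable measurable_const
  set D := {x | g x = 1} with hD
  set N := {x | g x = 1 ∧ ¬ DifferentiableAt ℝ g x} with hN
  have hNm : MeasurableSet N := hDm.inter (meas_nondiff g)
  have hN1 : coneM g d N = 0 := by
    rw [coneM_apply hg d hNm (fun x hx => hx.1), cone_nondiff hg (fun x hx => hx.2), mul_zero]
  have hN2 : W N = 0 := by
    refine withDensity_absolutelyContinuous _ _ ?_
    exact Measure.restrict_le_self.absolutelyContinuous (HE_null hg d hd)
  have hWc : W Dᶜ = 0 := by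
    refine withDensity_absolutelyContinuous _ _ ?_
    rw [Measure.restrict_apply hDm.compl, compl_inter_self, measure_empty]
  have hlim : Tendsto (fun s : ℝ => ENNReal.ofReal s ^ (2 * d + 2)) (𝓝[>] 1) (𝓝 1) := by
    have h1 : Continuous fun s : ℝ => ENNReal.ofReal s ^ (2 * d + 2) :=
      (ENNReal.continuous_pow _).comp ENNReal.continuous_ofReal
    have := h1.tendsto 1
    simp only [ENNReal.ofReal_one, one_pow] at this
    exact this.mono_left nhdsWithin_le_nhds
  have hmul : ∀ a : ℝ≥0∞, Tendsto (fun s : ℝ => ENNReal.ofReal s ^ (2 * d + 2) * a) (𝓝[>] 1)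
      (𝓝 a) := fun a => by
    simpa using ENNReal.Tendsto.mul_const hlim (b := a) (Or.inl one_ne_zero)
  have hloc : ∀ s : ℝ, 1 < s → ∀ x ∈ D \ N, _ := fun s hs x hx =>
    area_local hg d hd hν hνm hx.1 (by_contra fun h => hx.2 ⟨hx.1, h⟩) hs
  have key : ∀ A, MeasurableSet A → A ⊆ D → coneM g d A = W A := by
    intro A hA hAD
    apply le_antisymm
    · refine ge_of_tendsto (hmul (W A)) ?_
      filter_upwards [self_mem_nhdsWithin] with s hs
      refine glue _ _ D N hDm _ (fun x hx => ?_) hN1 hA hAD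
      obtain ⟨U, h1, h2, h3⟩ := hloc s hs x hx
      exact ⟨U, h1, h2, fun A hA hAU => (h3 A hA hAU).1⟩
    · refine ge_of_tendsto (hmul (coneM g d A)) ?_
      filter_upwards [self_mem_nhdsWithin] with s hs
      refine glue _ _ D N hDm _ (fun x hx => ?_) hN2 hA hAD
      obtain ⟨U, h1, h2, h3⟩ := hloc s hs x hx
      exact ⟨U, h1, h2, fun A hA hAU => (h3 A hA hAU).2⟩
  ext A hA
  rw [← measure_inter_add_sdiff A hDm, ← measure_inter_add_sdiff (μ := W) A hDm,
    key _ (hA.inter hDm) inter_subset_right,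
    measure_mono_null (show A \ D ⊆ Dᶜ from fun x hx => hx.2) (coneM_compl hg d),
    measure_mono_null (show A \ D ⊆ Dᶜ from fun x hx => hx.2) hWc]

end Area
end GDM

set_option linter.all false

namespace GDM

section Polar
open Module
variable {E : Type*} [NormedAddCommGroup E] [InnerProductSpace ℝ E] [FiniteDimensional ℝ E]
  [MeasurableSpace E] [BorelSpace E]

lemma polar (d : ℕ) (hd : finrank ℝ E = d + 1) {F : E → ℝ≥0∞} (hF : Measurable F) :
    ∫⁻ x, F x = ∫⁻ u : sphere (0 : E) 1, ∫⁻ r in Ioi (0 : ℝ), ENNReal.ofReal (r ^ d) * F (r • (u : E))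
      ∂volume ∂(volume : Measure E).toSphere := by
  haveI : Nontrivial E := Module.nontrivial_of_finrank_pos (R := ℝ) (by omega)
  have hmp := (volume : Measure E).measurePreserving_homeomorphUnitSphereProd
  have h1 : ∫⁻ x, F x = ∫⁻ x : ({0}ᶜ : Set E), F x ∂((volume : Measure E).comap Subtype.val) := by
    rw [lintegral_subtype_comap (measurableSet_singleton (0 : E)).compl]
    rw [Measure.restrict_congr_set (show ({0}ᶜ : Set E) =ᵐ[volume] univ from ?_),
      Measure.restrict_univ]
    rw [ae_eq_univ, compl_compl]
    simp
  have h2 : ∀ x : ({0}ᶜ : Set E), F x =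
      (fun y : sphere (0 : E) 1 × Ioi (0 : ℝ) => F ((y.2 : ℝ) • (y.1 : E)))
        (homeomorphUnitSphereProd E x) := by
    intro x
    have hx : ‖(x : E)‖ ≠ 0 := norm_ne_zero_iff.2 x.2
    simp [smul_smul, hx]
  have hG : Measurable (fun y : sphere (0 : E) 1 × Ioi (0 : ℝ) => F ((y.2 : ℝ) • (y.1 : E))) := by
    fun_prop
  rw [h1, lintegral_congr h2, hmp.lintegral_comp hG, lintegral_prod _ hG.aemeasurable]
  refine lintegral_congr fun u => ?_
  have hFu : Measurable (fun r : ℝ => F (r • (u : E))) := by fun_prop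
  rw [Measure.volumeIoiPow, lintegral_withDensity_eq_lintegral_mul _ (by fun_prop) (by fun_prop)]
  have := lintegral_subtype_comap (μ := (volume : Measure ℝ)) (measurableSet_Ioi (a := (0 : ℝ)))
    (fun r : ℝ => ENNReal.ofReal (r ^ d) * F (r • (u : E)))
  rw [← this, hd, Nat.add_sub_cancel]
  rfl

lemma norm_sph (u : sphere (0 : E) 1) : ‖(u : E)‖ = 1 := by simpa using u.2

lemma sph_ne (u : sphere (0 : E) 1) : (u : E) ≠ 0 := by
  intro h
  have := norm_sph u
  rw [h, norm_zero] at this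
  norm_num at this

lemma lint_pow' (d : ℕ) (b : ℝ) (hb : 0 < b) :
    ∫⁻ s in Ioo (0 : ℝ) b, ENNReal.ofReal (s ^ d) = ENNReal.ofReal (b ^ (d + 1) / (d + 1)) := by
  rw [Measure.restrict_congr_set Ioo_ae_eq_Ioc,
    ← ofReal_integral_eq_lintegral_ofReal (intervalIntegral.intervalIntegrable_pow _).1,
    ← intervalIntegral.integral_of_le hb.le]
  · simp
  · filter_upwards [ae_restrict_mem measurableSet_Ioc] with y hy
    exact pow_nonneg hy.1.le _

lemma lint_coneM {g : E → ℝ} (hg : IsGauge g) (d : ℕ) (hd : finrank ℝ E = d + 1)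
    {f : E → ℝ≥0∞} (hf : Measurable f) :
    ∫⁻ x, f x ∂(coneM g d) = ∫⁻ u : sphere (0 : E) 1,
      f ((g u)⁻¹ • (u : E)) * ENNReal.ofReal ((g u)⁻¹ ^ (d + 1)) ∂(volume : Measure E).toSphere := by
  have hm := hg.cont.measurable
  have hr := meas_retr hg
  have hS : MeasurableSet {x | 0 < g x ∧ g x < 1} :=
    (measurableSet_lt measurable_const hm).inter (measurableSet_lt hm measurable_const)
  rw [coneM, lintegral_smul_measure, lintegral_map hf hr, smul_eq_mul,
    ← lintegral_indicator hS, polar d hd (F := {x | 0 < g x ∧ g x < 1}.indicator (fun a => f ((g a)⁻¹ • a)))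
      ((hf.comp hr).indicator hS),
    ← lintegral_const_mul']
  swap
  · exact ENNReal.add_ne_top.2 ⟨ENNReal.natCast_ne_top _, ENNReal.one_ne_top⟩
  refine lintegral_congr fun u => ?_
  have gu : 0 < g u := hg.pos_of_ne (sph_ne u)
  have e : ∀ r ∈ Ioi (0 : ℝ), ENNReal.ofReal (r ^ d) *
      {x | 0 < g x ∧ g x < 1}.indicator (fun a => f ((g a)⁻¹ • a)) (r • (u : E)) =
      (Ioo 0 (g u)⁻¹).indicator (fun r => ENNReal.ofReal (r ^ d) * f ((g u)⁻¹ • (u : E))) r := by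
    intro r hr
    have hr : 0 < r := hr
    have hgr : g (r • (u : E)) = r * g u := hg.hom r hr.le _
    by_cases h : r < (g u)⁻¹
    · rw [indicator_of_mem, indicator_of_mem (show r ∈ Ioo 0 (g u)⁻¹ from ⟨hr, h⟩)]
      · rw [hgr, smul_smul, mul_inv, mul_comm r⁻¹, mul_assoc, inv_mul_cancel₀ hr.ne', mul_one]
      · show 0 < g _ ∧ g _ < 1
        rw [hgr]
        exact ⟨by positivity, by rwa [lt_inv_comm₀ hr gu, ← one_div, lt_div_iff₀ hr, mul_comm] at h⟩
    · rw [indicator_of_notMem, indicator_of_notMem (fun h' => h h'.2), mul_zero]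
      rintro ⟨-, h'⟩
      rw [hgr] at h'
      apply h
      rwa [← one_div, lt_div_iff₀ gu]
  rw [setLIntegral_congr_fun measurableSet_Ioi e, setLIntegral_indicator measurableSet_Ioo,
    inter_eq_self_of_subset_left Ioo_subset_Ioi_self, lintegral_mul_const _ (by fun_prop),
    lint_pow' d _ (inv_pos.2 gu)]
  rw [mul_comm (f _), ← mul_assoc]
  congr 1
  have : ((d : ℝ≥0∞) + 1) = ENNReal.ofReal ((d : ℝ) + 1) := by
    rw [ENNReal.ofReal_add (by positivity) zero_le_one]; simp
  rw [this, ← ENNReal.ofReal_mul (by positivity)]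
  congr 1
  field_simp

/-- Radial density. -/
noncomputable def phi (q : ℝ) (s : ℝ) : ℝ := s ^ (q - 1) * Real.exp (-s ^ 2 / 2)

noncomputable def Phi (q : ℝ) (r : ℝ) : ℝ := ∫ s in (0 : ℝ)..r, phi q s

lemma phi_cont {q : ℝ} (hq : 1 < q) : Continuous (phi q) := by
  unfold phi
  have := Real.continuous_rpow_const (q := q - 1) (by linarith)
  fun_prop

lemma phi_nonneg {q s : ℝ} (hs : 0 ≤ s) : 0 ≤ phi q s := by unfold phi; positivity

lemma Phi_deriv {q : ℝ} (hq : 1 < q) (r : ℝ) : HasDerivAt (Phi q) (phi q r) r :=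
  intervalIntegral.integral_hasDerivAt_right ((phi_cont hq).intervalIntegrable _ _)
    ((phi_cont hq).stronglyMeasurableAtFilter _ _) (phi_cont hq).continuousAt

lemma Phi_nonneg {q r : ℝ} (hr : 0 ≤ r) : 0 ≤ Phi q r :=
  intervalIntegral.integral_nonneg hr fun s hs => phi_nonneg hs.1

lemma phi_int {q : ℝ} (hq : 1 < q) : IntegrableOn (phi q) (Ioi 0) := by
  have := integrableOn_rpow_mul_exp_neg_mul_sq (b := 1 / 2) (by norm_num) (s := q - 1) (by linarith)
  refine this.congr_fun (fun x hx => ?_) measurableSet_Ioi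
  simp only [phi]
  congr 2
  ring

/-- weighted volume -/
noncomputable def wvol (E : Type*) [NormedAddCommGroup E] [InnerProductSpace ℝ E]
    [FiniteDimensional ℝ E] [MeasurableSpace E] [BorelSpace E] (d : ℕ) (q : ℝ) : Measure E :=
  (volume : Measure E).withDensity
    (fun x => ENNReal.ofReal (‖x‖ ^ (q - (d + 1)) * Real.exp (-‖x‖ ^ 2 / 2)))

lemma meas_w (d : ℕ) (q : ℝ) : Measurable
    (fun x : E => ENNReal.ofReal (‖x‖ ^ (q - (d + 1)) * Real.exp (-‖x‖ ^ 2 / 2))) := by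
  fun_prop

lemma wvol_set (d : ℕ) (hd : finrank ℝ E = d + 1) (q : ℝ) {A : Set E} (hA : MeasurableSet A) :
    wvol E d q A = ∫⁻ u : sphere (0 : E) 1, ∫⁻ r in Ioi (0 : ℝ),
      ENNReal.ofReal (phi q r) * A.indicator 1 (r • (u : E)) ∂volume ∂(volume : Measure E).toSphere := by
  rw [wvol, withDensity_apply _ hA, ← lintegral_indicator hA, polar d hd ((meas_w d q).indicator hA)]
  refine lintegral_congr fun u => setLIntegral_congr_fun measurableSet_Ioi fun r hr => ?_
  have hr : 0 < r := hr
  by_cases h : r • (u : E) ∈ A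
  · rw [indicator_of_mem h, indicator_of_mem h, Pi.one_apply, mul_one, norm_smul, norm_sph, mul_one,
      Real.norm_of_nonneg hr.le, ← ENNReal.ofReal_mul (by positivity), phi, ← mul_assoc]
    congr 2
    rw [← Real.rpow_natCast r d, ← Real.rpow_add hr]
    congr 1
    ring
  · rw [indicator_of_notMem h, indicator_of_notMem h, mul_zero, mul_zero]

lemma wvol_finite (d : ℕ) (hd : finrank ℝ E = d + 1) {q : ℝ} (hq : 1 < q) :
    IsFiniteMeasure (wvol E d q) := by
  refine ⟨?_⟩
  rw [wvol_set d hd q MeasurableSet.univ]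
  simp only [indicator_univ, Pi.one_apply, mul_one, lintegral_const]
  exact ENNReal.mul_lt_top (phi_int hq).lintegral_lt_top (measure_lt_top _ _)

lemma wvol_gauge {g : E → ℝ} (hg : IsGauge g) (d : ℕ) (hd : finrank ℝ E = d + 1) {q : ℝ} (hq : 1 < q) :
    wvol E d q {x | g x ≤ 1} = ∫⁻ u : sphere (0 : E) 1, ENNReal.ofReal (Phi q (g u)⁻¹)
      ∂(volume : Measure E).toSphere := by
  have hm := hg.cont.measurable
  rw [wvol_set d hd q (measurableSet_le hm measurable_const)]
  refine lintegral_congr fun u => ?_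
  have gu : 0 < g u := hg.pos_of_ne (sph_ne u)
  have e : ∀ r ∈ Ioi (0 : ℝ), ENNReal.ofReal (phi q r) * {x | g x ≤ 1}.indicator 1 (r • (u : E)) =
      (Ioc 0 (g u)⁻¹).indicator (fun r => ENNReal.ofReal (phi q r)) r := by
    intro r hr
    have hr : 0 < r := hr
    have hgr : g (r • (u : E)) = r * g u := hg.hom r hr.le _
    by_cases h : r ≤ (g u)⁻¹
    · rw [indicator_of_mem, indicator_of_mem (show r ∈ Ioc 0 (g u)⁻¹ from ⟨hr, h⟩), Pi.one_apply,
        mul_one]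
      show g _ ≤ 1
      rw [hgr]
      rwa [← one_div, le_div_iff₀ gu] at h
    · rw [indicator_of_notMem, indicator_of_notMem (fun h' => h h'.2), mul_zero]
      intro h'
      have h' : g _ ≤ 1 := h'
      rw [hgr] at h'
      apply h
      rwa [← one_div, le_div_iff₀ gu]
  rw [setLIntegral_congr_fun measurableSet_Ioi e, setLIntegral_indicator measurableSet_Ioc,
    inter_eq_self_of_subset_left Ioc_subset_Ioi_self, Phi,
    intervalIntegral.integral_of_le (inv_pos.2 gu).le, ofReal_integral_eq_lintegral_ofReal]
  · exact ((phi_cont hq).integrableOn_Icc).mono_set Ioc_subset_Icc_self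
  · filter_upwards [ae_restrict_mem measurableSet_Ioc] with y hy
    exact phi_nonneg hy.1.le

/-- directions of non-differentiability are null -/
lemma sphere_diff {g : E → ℝ} (hg : IsGauge g) (d : ℕ) (hd : finrank ℝ E = d + 1) :
    ∀ᵐ u : sphere (0 : E) 1 ∂(volume : Measure E).toSphere, DifferentiableAt ℝ g u := by
  have hm : MeasurableSet {u : sphere (0 : E) 1 | ¬ DifferentiableAt ℝ g u} :=
    measurable_subtype_coe (meas_nondiff g)
  rw [ae_iff, Measure.toSphere_apply' _ hm, cone_nondiff hg, mul_zero]
  rintro _ ⟨u, hu, rfl⟩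
  exact hu

end Polar
end GDM

set_option linter.all false

namespace GDM

section Exist
open Module
variable {E : Type*} [NormedAddCommGroup E] [InnerProductSpace ℝ E] [FiniteDimensional ℝ E]
  [MeasurableSpace E] [BorelSpace E]

/-- The Wulff shape of `h`. -/
def wulff (h : sphere (0 : E) 1 → ℝ) : Set E := {x | ∀ v : sphere (0 : E) 1, ⟪x, (v : E)⟫ ≤ h v}

lemma wulff_closed (h : sphere (0 : E) 1 → ℝ) : IsClosed (wulff h) := by
  have : wulff h = ⋂ v : sphere (0 : E) 1, {x | ⟪x, (v : E)⟫ ≤ h v} := by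
    ext x; simp [wulff]
  rw [this]
  exact isClosed_iInter fun v => isClosed_le (by fun_prop) continuous_const

lemma wulff_mono {h k : sphere (0 : E) 1 → ℝ} (hk : ∀ v, h v ≤ k v) : wulff h ⊆ wulff k :=
  fun _ hx v => (hx v).trans (hk v)

lemma exists_dir (x : E) (hx : x ≠ 0) : ∃ v : sphere (0 : E) 1, x = ‖x‖ • (v : E) := by
  have h : ‖x‖ ≠ 0 := norm_ne_zero_iff.2 hx
  refine ⟨⟨‖x‖⁻¹ • x, by simp [norm_smul, h]⟩, ?_⟩
  simp [smul_smul, h]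

lemma wulff_bdd {h : sphere (0 : E) 1 → ℝ} {R : ℝ} (hR : 0 ≤ R) (hh : ∀ v, h v ≤ R) :
    wulff h ⊆ closedBall 0 R := by
  intro x hx
  rw [mem_closedBall_zero_iff]
  by_cases h0 : x = 0
  · rw [h0, norm_zero]; exact hR
  · obtain ⟨v, hv⟩ := exists_dir x h0
    have h1 := hx v
    have h2 : ⟪x, (v : E)⟫ = ‖x‖ := by
      conv_lhs => rw [hv]
      rw [inner_smul_left, real_inner_self_eq_norm_sq, norm_sph]; simp
    linarith [hh v]

lemma wulff_abs {h : sphere (0 : E) 1 → ℝ} (he : ∀ v, h (-v) = h v) {x : E} (hx : x ∈ wulff h)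
    (v : sphere (0 : E) 1) : |⟪x, (v : E)⟫| ≤ h v := by
  rw [abs_le]
  have h1 := hx v
  have h2 := hx (-v)
  rw [he] at h2
  simp only [coe_neg_sphere, inner_neg_right] at h2
  exact ⟨by linarith, h1⟩

lemma wulff_neg {h : sphere (0 : E) 1 → ℝ} (he : ∀ v, h (-v) = h v) {x : E} (hx : x ∈ wulff h) :
    -x ∈ wulff h := by
  intro v
  rw [inner_neg_left]
  have := wulff_abs he hx v
  rw [abs_le] at this
  linarith

lemma wulff_iInter (h : sphere (0 : E) 1 → ℝ) :
    ⋂ k : ℕ, wulff (fun v => h v + 1 / ((k : ℝ) + 1)) = wulff h := by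
  ext x
  simp only [mem_iInter]
  constructor
  · intro H v
    have : Tendsto (fun k : ℕ => h v + 1 / ((k : ℝ) + 1)) atTop (𝓝 (h v + 0)) :=
      tendsto_const_nhds.add tendsto_one_div_add_atTop_nhds_zero_nat
    rw [add_zero] at this
    exact ge_of_tendsto' this fun k => H k v
  · intro H k
    refine wulff_mono (fun v => ?_) H
    have : 0 < 1 / ((k : ℝ) + 1) := by positivity
    linarith

/-- support function -/
noncomputable def supp (K : Set E) (v : sphere (0 : E) 1) : ℝ := sSup ((fun x => ⟪x, (v : E)⟫) '' K)

lemma supp_attained {K : Set E} (hK : IsCompact K) (hne : K.Nonempty) (v : sphere (0 : E) 1) :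
    ∃ x ∈ K, ⟪x, (v : E)⟫ = supp K v := by
  obtain ⟨x, hx, h⟩ := hK.exists_sSup_image_eq hne (f := fun x => ⟪x, (v : E)⟫)
    (by fun_prop)
  exact ⟨x, hx, h.symm⟩

lemma le_supp {K : Set E} (hK : IsCompact K) {x : E} (hx : x ∈ K) (v : sphere (0 : E) 1) :
    ⟪x, (v : E)⟫ ≤ supp K v := by
  refine le_csSup (hK.image (by fun_prop)).bddAbove (mem_image_of_mem _ hx)

lemma supp_lip {K : Set E} (hK : IsCompact K) (hne : K.Nonempty) {R : ℝ} (hR : K ⊆ closedBall 0 R)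
    (u v : sphere (0 : E) 1) : |supp K u - supp K v| ≤ R * dist u v := by
  have key : ∀ u v : sphere (0 : E) 1, supp K u - supp K v ≤ R * dist u v := by
    intro u v
    obtain ⟨x, hx, h⟩ := supp_attained hK hne u
    have h2 := le_supp hK hx v
    have h3 : ⟪x, (u : E)⟫ - ⟪x, (v : E)⟫ ≤ ‖x‖ * ‖(u : E) - v‖ := by
      rw [← inner_sub_right]; exact real_inner_le_norm _ _
    have h4 : ‖x‖ ≤ R := by simpa using hR hx
    have h5 : dist u v = ‖(u : E) - v‖ := by rw [Subtype.dist_eq, dist_eq_norm]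
    rw [h5]
    nlinarith [norm_nonneg ((u : E) - v)]
  rw [abs_le]
  have h1 := key u v
  have h2 := key v u
  rw [dist_comm v u] at h2
  exact ⟨by linarith, h1⟩

/-- The functional to be maximised. -/
noncomputable def JJ (W : Measure E) (m : Measure (sphere (0 : E) 1)) (p l : ℝ)
    (h : sphere (0 : E) 1 → ℝ) : ℝ := (W (wulff h)).toReal - l * ∫ v, h v ^ p ∂m

theorem exists_max (W : Measure E) [IsFiniteMeasure W] (hW : W ≪ volume)
    (hW1 : W (closedBall 0 1) ≠ 0) (m : Measure (sphere (0 : E) 1)) [IsFiniteMeasure m]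
    (hm : ∀ v : sphere (0 : E) 1, m {u | ⟪(v : E), (u : E)⟫ ≠ 0} ≠ 0) {p : ℝ} (hp : 1 < p)
    (hS : Nonempty (sphere (0 : E) 1)) :
    ∃ h : sphere (0 : E) 1 → ℝ, Continuous h ∧ (∀ v, 0 < h v) ∧ (∀ v, h (-v) = h v) ∧
      (∀ v : sphere (0 : E) 1, ∃ x ∈ wulff h, ⟪x, (v : E)⟫ = h v) ∧ ∃ l : ℝ, 0 < l ∧
        ∀ k : sphere (0 : E) 1 → ℝ, Continuous k → (∀ v, 0 < k v) → (∀ v, k (-v) = k v) →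
          JJ W m p l k ≤ JJ W m p l h := by
  have hp0 : 0 < p := by linarith
  have rpc : Continuous fun x : ℝ => x ^ p := Real.continuous_rpow_const hp0.le
  -- choice of l
  set w1 : ℝ := (W (closedBall 0 1)).toReal with hw1
  have hw1pos : 0 < w1 := ENNReal.toReal_pos hW1 (measure_ne_top _ _)
  set ms : ℝ := m.real univ with hms
  have hms0 : 0 ≤ ms := measureReal_nonneg
  set l : ℝ := w1 / (2 * (ms + 1)) with hl
  have hlpos : 0 < l := by positivity
  have hlms : l * ms < w1 := by
    rw [hl, div_mul_eq_mul_div, div_lt_iff₀ (by positivity)]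
    nlinarith
  -- choice of c0
  have hcont : Continuous fun x : sphere (0 : E) 1 => ∫ v : sphere (0 : E) 1, |⟪(x : E), (v : E)⟫| ^ p ∂m := by
    refine continuous_of_dominated (bound := fun _ => 1) (fun x => ?_) (fun x => ?_)
      (integrable_const _) ?_
    · exact (rpc.comp (by fun_prop : Continuous fun v : sphere (0 : E) 1 => |⟪(x : E), (v : E)⟫|)).aestronglyMeasurable
    · refine Eventually.of_forall fun v => ?_
      rw [Real.norm_of_nonneg (by positivity)]
      refine Real.rpow_le_one (abs_nonneg _) ?_ hp0.le
      have := abs_real_inner_le_norm (x : E) (v : E)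
      rwa [norm_sph, norm_sph, mul_one] at this
    · refine Eventually.of_forall fun v => ?_
      exact rpc.comp (by fun_prop : Continuous fun x : sphere (0 : E) 1 => |⟪(x : E), (v : E)⟫|)
  obtain ⟨x0, -, hx0⟩ := isCompact_univ.exists_isMinOn (univ_nonempty (α := sphere (0 : E) 1))
    hcont.continuousOn
  set c0 := ∫ v : sphere (0 : E) 1, |⟪(x0 : E), (v : E)⟫| ^ p ∂m with hc0
  have hint1 : ∀ x : sphere (0 : E) 1, Integrable (fun v : sphere (0 : E) 1 => |⟪(x : E), (v : E)⟫| ^ p) m := by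
    intro x
    refine Continuous.integrable_of_hasCompactSupport ?_ (HasCompactSupport.of_compactSpace _)
    exact rpc.comp (by fun_prop : Continuous fun v : sphere (0 : E) 1 => |⟪(x : E), (v : E)⟫|)
  have hc0pos : 0 < c0 := by
    rw [hc0, integral_pos_iff_support_of_nonneg (fun v => by positivity) (hint1 x0)]
    refine lt_of_lt_of_le (pos_iff_ne_zero.2 (hm x0)) (measure_mono fun u hu => ?_)
    have hu : ⟪(x0 : E), (u : E)⟫ ≠ 0 := hu
    rw [Function.mem_support]
    have := abs_pos.2 hu
    positivity
  have hc0le : ∀ x : sphere (0 : E) 1, c0 ≤ ∫ v : sphere (0 : E) 1, |⟪(x : E), (v : E)⟫| ^ p ∂m :=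
    fun x => hx0 (mem_univ x)
  -- choice of R
  set wt : ℝ := (W univ).toReal with hwt
  have hwt0 : 0 ≤ wt := ENNReal.toReal_nonneg
  set R : ℝ := max 1 (wt / (l * c0)) with hR
  have hR1 : 1 ≤ R := le_max_left _ _
  have hRp : wt ≤ l * (R ^ p * c0) := by
    have h1 : wt / (l * c0) ≤ R := le_max_right _ _
    have h2 : R ≤ R ^ p := by
      conv_lhs => rw [← Real.rpow_one R]
      exact Real.rpow_le_rpow_of_exponent_le hR1 hp.le
    rw [div_le_iff₀ (by positivity)] at h1
    have h3 : 0 < l * c0 := by positivity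
    nlinarith
  have hintc : ∀ k : sphere (0 : E) 1 → ℝ, Continuous k → Integrable (fun v => k v ^ p) m := fun k hk =>
    Continuous.integrable_of_hasCompactSupport (rpc.comp hk) (HasCompactSupport.of_compactSpace _)
  have hbig : ∀ k : sphere (0 : E) 1 → ℝ, Continuous k → (∀ v, k (-v) = k v) →
      ¬ wulff k ⊆ closedBall 0 R → JJ W m p l k ≤ 0 := by
    intro k hk hke hsub
    obtain ⟨x, hx, hxR⟩ := not_subset.1 hsub
    rw [mem_closedBall_zero_iff, not_le] at hxR
    have hx0 : x ≠ 0 := by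
      rintro rfl
      rw [norm_zero] at hxR; linarith
    obtain ⟨v, hv⟩ := exists_dir x hx0
    have h1 : R ^ p * c0 ≤ ∫ u, k u ^ p ∂m := by
      calc R ^ p * c0 ≤ ‖x‖ ^ p * ∫ u : sphere (0 : E) 1, |⟪(v : E), (u : E)⟫| ^ p ∂m := by
            have := hc0le v
            gcongr
        _ = ∫ u : sphere (0 : E) 1, ‖x‖ ^ p * |⟪(v : E), (u : E)⟫| ^ p ∂m := (integral_const_mul _ _).symm
        _ ≤ _ := by
            refine integral_mono ((hint1 v).const_mul _) (hintc k hk) fun u => ?_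
            have h2 := wulff_abs hke hx u
            rw [hv, inner_smul_left, abs_mul] at h2
            simp only [conj_trivial, abs_norm] at h2
            simp only
            rw [← Real.mul_rpow (norm_nonneg _) (abs_nonneg _)]
            exact Real.rpow_le_rpow (by positivity) h2 hp0.le
    have h2 : (W (wulff k)).toReal ≤ wt :=
      ENNReal.toReal_mono (measure_ne_top _ _) (measure_mono (subset_univ _))
    rw [JJ]
    nlinarith
  -- compact class
  set A : Set (BoundedContinuousFunction (sphere (0 : E) 1) ℝ) :=
    {h | (∀ u, h u ∈ Icc 0 R) ∧ (∀ u v, |h u - h v| ≤ R * dist u v) ∧ ∀ u, h (-u) = h u} with hA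
  have hev : ∀ u : sphere (0 : E) 1, Continuous fun h : BoundedContinuousFunction (sphere (0 : E) 1) ℝ => h u :=
    fun u => continuous_eval_const u
  have hAcl : IsClosed A := by
    refine IsClosed.inter ?_ (IsClosed.inter ?_ ?_)
    · have : {h : BoundedContinuousFunction (sphere (0 : E) 1) ℝ | ∀ u, h u ∈ Icc 0 R} = ⋂ u, {h | h u ∈ Icc 0 R} := by
        ext; simp
      have c := isClosed_iInter fun u => (isClosed_Icc (a := (0 : ℝ)) (b := R)).preimage (hev u)
      have c' : IsClosed (⋂ u, {h : BoundedContinuousFunction (sphere (0 : E) 1) ℝ | h u ∈ Icc 0 R}) := c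
      rw [← this] at c'
      exact c'
    · have : {h : BoundedContinuousFunction (sphere (0 : E) 1) ℝ | ∀ u v, |h u - h v| ≤ R * dist u v} =
        ⋂ u, ⋂ v, {h | |h u - h v| ≤ R * dist u v} := by ext; simp
      have c : IsClosed (⋂ u, ⋂ v, {h : BoundedContinuousFunction (sphere (0 : E) 1) ℝ |
          |h u - h v| ≤ R * dist u v}) := isClosed_iInter fun u => isClosed_iInter fun v =>
        isClosed_le (((hev u).sub (hev v)).abs) (continuous_const (y := R * dist u v))
      rw [← this] at c
      exact c
    · have : {h : BoundedContinuousFunction (sphere (0 : E) 1) ℝ | ∀ u, h (-u) = h u} = ⋂ u, {h | h (-u) = h u} := by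
        ext; simp
      have c := isClosed_iInter fun u => isClosed_eq (hev (-u)) (hev u)
      rw [← this] at c
      exact c
  have hAc : IsCompact A := by
    refine BoundedContinuousFunction.arzela_ascoli₂ (Icc 0 R) isCompact_Icc A hAcl
      (fun h u hh => hh.1 u) ?_
    refine equicontinuous_of_continuity_modulus (fun t => R * t) ?_ _ ?_
    · have : Continuous fun t : ℝ => R * t := by fun_prop
      simpa using this.tendsto 0
    · intro u v h
      rw [Real.dist_eq]
      exact h.2.2.1 u v
  have h1A : BoundedContinuousFunction.const (sphere (0 : E) 1) (1 : ℝ) ∈ A := by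
    refine ⟨fun u => ⟨zero_le_one, hR1⟩, fun u v => ?_, fun u => rfl⟩
    simp only [BoundedContinuousFunction.const_apply, sub_self, abs_zero]
    positivity
  have husc : UpperSemicontinuousOn
      (fun h : BoundedContinuousFunction (sphere (0 : E) 1) ℝ => JJ W m p l h) A := by
    intro h _
    apply UpperSemicontinuousAt.upperSemicontinuousWithinAt
    have hI : ContinuousAt (fun h : BoundedContinuousFunction (sphere (0 : E) 1) ℝ => ∫ v, h v ^ p ∂m) h := by
      refine continuousAt_of_dominated (bound := fun _ => (‖h‖ + 1) ^ p) ?_ ?_ (integrable_const _) ?_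
      · exact Eventually.of_forall fun k => (rpc.comp k.continuous).aestronglyMeasurable
      · filter_upwards [ball_mem_nhds h one_pos] with k hk
        refine Eventually.of_forall fun v => ?_
        refine (Real.abs_rpow_le_abs_rpow _ _).trans ?_
        refine Real.rpow_le_rpow (abs_nonneg _) ?_ hp0.le
        have h1 : |k v| ≤ ‖k‖ := k.norm_coe_le_norm v
        have h2 : ‖k‖ ≤ ‖h‖ + ‖k - h‖ := norm_le_norm_add_norm_sub' k h
        rw [mem_ball, dist_eq_norm] at hk
        linarith
      · exact Eventually.of_forall fun v => (rpc.comp (hev v)).continuousAt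
    have hlim : Tendsto (fun k : ℕ => (W (wulff fun v => h v + 1 / ((k : ℝ) + 1))).toReal) atTop
        (𝓝 (W (wulff h)).toReal) := by
      have := tendsto_measure_iInter_atTop (μ := W)
        (s := fun k : ℕ => wulff fun v => h v + 1 / ((k : ℝ) + 1))
        (fun k => (wulff_closed _).measurableSet.nullMeasurableSet)
        (fun i j hij => wulff_mono fun v => by
          have : (1 : ℝ) / (j + 1) ≤ 1 / (i + 1) := by gcongr
          linarith) ⟨0, measure_ne_top _ _⟩
      rw [wulff_iInter] at this
      exact (ENNReal.tendsto_toReal (measure_ne_top _ _)).comp this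
    intro y hy
    simp only at hy
    rw [JJ] at hy
    set e := (y - ((W (wulff h)).toReal - l * ∫ v, h v ^ p ∂m)) / 2 with he
    have hepos : 0 < e := by rw [he]; linarith
    obtain ⟨k, hk⟩ := (hlim.eventually (gt_mem_nhds (show (W (wulff h)).toReal <
      (W (wulff h)).toReal + e by linarith))).exists
    have hI2 : Tendsto (fun h : BoundedContinuousFunction (sphere (0 : E) 1) ℝ => l * ∫ v, h v ^ p ∂m) (𝓝 h)
      (𝓝 (l * ∫ v, h v ^ p ∂m)) := (hI.tendsto).const_mul l
    filter_upwards [hI2.eventually (lt_mem_nhds (show l * ∫ v, h v ^ p ∂m - e < l * ∫ v, h v ^ p ∂m by linarith)),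
      ball_mem_nhds h (show (0 : ℝ) < 1 / ((k : ℝ) + 1) by positivity)] with k' hk1 hk2
    have h3 : (W (wulff k')).toReal ≤ (W (wulff fun v => h v + 1 / ((k : ℝ) + 1))).toReal := by
      refine ENNReal.toReal_mono (measure_ne_top _ _) (measure_mono (wulff_mono fun v => ?_))
      have h4 := k'.dist_coe_le_dist (g := h) v
      rw [mem_ball] at hk2
      rw [Real.dist_eq] at h4
      have := le_abs_self (k' v - h v)
      linarith
    rw [JJ]
    linarith
  obtain ⟨h, hhA, hmax⟩ := husc.exists_isMaxOn ⟨_, h1A⟩ hAc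
  have hJ1 : 0 < JJ W m p l h := by
    have h1 := hmax h1A
    have h2 : w1 - l * ms ≤ JJ W m p l (BoundedContinuousFunction.const (sphere (0 : E) 1) (1 : ℝ)) := by
      rw [JJ]
      simp only [BoundedContinuousFunction.const_apply, Real.one_rpow, integral_const, smul_eq_mul,
        mul_one]
      have : w1 ≤ (W (wulff ⇑(BoundedContinuousFunction.const (sphere (0 : E) 1) (1 : ℝ)))).toReal := by
        refine ENNReal.toReal_mono (measure_ne_top _ _) (measure_mono fun x hx v => ?_)
        rw [mem_closedBall_zero_iff] at hx
        have := real_inner_le_norm x (v : E)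
        rw [norm_sph, mul_one] at this
        exact this.trans hx
      have e : ⇑(BoundedContinuousFunction.const (sphere (0 : E) 1) (1 : ℝ)) = fun _ => 1 := rfl
      rw [e] at this
      linarith
    have h1 : JJ W m p l (BoundedContinuousFunction.const (sphere (0 : E) 1) (1 : ℝ)) ≤ JJ W m p l h := h1
    linarith
  have hWpos : 0 < (W (wulff h)).toReal := by
    have : 0 ≤ ∫ v, h v ^ p ∂m := integral_nonneg fun v => Real.rpow_nonneg (hhA.1 v).1 _
    rw [JJ] at hJ1
    nlinarith
  have hWne : W (wulff h) ≠ 0 := fun h0 => by rw [h0] at hWpos; simp at hWpos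
  -- the support function argument
  have hsupp : ∀ k : sphere (0 : E) 1 → ℝ, Continuous k → (∀ v, 0 ≤ k v) → (∀ v, k (-v) = k v) →
      wulff k ⊆ closedBall 0 R →
      ∃ s ∈ A, wulff s = wulff k ∧ (∀ v, s v ≤ k v) ∧ (∀ v : sphere (0 : E) 1, ∃ x ∈ wulff k, ⟪x, (v : E)⟫ = s v) ∧
        JJ W m p l k ≤ JJ W m p l s := by
    intro k hkc hk0 hke hkR
    have hcomp : IsCompact (wulff k) :=
      (isCompact_closedBall (0 : E) R).of_isClosed_subset (wulff_closed k) hkR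
    have h0k : (0 : E) ∈ wulff k := fun v => by rw [inner_zero_left]; exact hk0 v
    have hne : (wulff k).Nonempty := ⟨0, h0k⟩
    have hlip := supp_lip hcomp hne hkR
    have hsc : Continuous (supp (wulff k)) := by
      refine (LipschitzWith.of_dist_le_mul (K := R.toNNReal) fun u v => ?_).continuous
      rw [Real.coe_toNNReal _ (by linarith), Real.dist_eq]
      exact hlip u v
    have hle : ∀ v, supp (wulff k) v ≤ k v := fun v => by
      obtain ⟨x, hx, h⟩ := supp_attained hcomp hne v
      rw [← h]; exact hx v
    have hge0 : ∀ v, 0 ≤ supp (wulff k) v := fun v => by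
      have := le_supp hcomp h0k v
      rwa [inner_zero_left] at this
    set s : BoundedContinuousFunction (sphere (0 : E) 1) ℝ := BoundedContinuousFunction.mkOfCompact ⟨_, hsc⟩ with hs
    have hscoe : ∀ v, s v = supp (wulff k) v := fun v => rfl
    have hwu : wulff s = wulff k := by
      apply Subset.antisymm
      · exact wulff_mono hle
      · exact fun x hx v => le_supp hcomp hx v
    refine ⟨s, ⟨fun u => ⟨hge0 u, ?_⟩, hlip, fun u => ?_⟩, hwu, hle,
      supp_attained hcomp hne, ?_⟩
    · obtain ⟨x, hx, h⟩ := supp_attained hcomp hne u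
      rw [hscoe, ← h]
      have h1 := real_inner_le_norm x (u : E)
      rw [norm_sph, mul_one] at h1
      have h2 := hkR hx
      rw [mem_closedBall_zero_iff] at h2
      linarith
    · have key : ∀ u, supp (wulff k) (-u) ≤ supp (wulff k) u := fun u => by
        obtain ⟨x, hx, h⟩ := supp_attained hcomp hne (-u)
        rw [← h]
        have := le_supp hcomp (wulff_neg hke hx) u
        simpa using this
      rw [hscoe, hscoe]
      refine le_antisymm (key u) ?_
      have := key (-u)
      rwa [neg_neg] at this
    · rw [JJ, JJ, hwu]
      have : ∫ v, s v ^ p ∂m ≤ ∫ v, k v ^ p ∂m :=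
        integral_mono (hintc _ hsc) (hintc _ hkc) fun v =>
          Real.rpow_le_rpow (hge0 v) (hle v) hp0.le
      nlinarith
  have hmaxall : ∀ k : sphere (0 : E) 1 → ℝ, Continuous k → (∀ v, 0 < k v) → (∀ v, k (-v) = k v) →
      JJ W m p l k ≤ JJ W m p l h := by
    intro k hkc hk0 hke
    by_cases hsub : wulff k ⊆ closedBall 0 R
    · obtain ⟨s, hs, -, -, -, hJ⟩ := hsupp k hkc (fun v => (hk0 v).le) hke hsub
      exact hJ.trans (hmax hs)
    · exact (hbig k hkc hke hsub).trans hJ1.le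
  have hR0 : 0 ≤ R := by linarith
  obtain ⟨s, hsA, hws, hsle, hsatt, hJs⟩ := hsupp h h.continuous (fun v => (hhA.1 v).1) hhA.2.2
    (wulff_bdd hR0 fun v => (hhA.1 v).2)
  refine ⟨s, s.continuous, fun v => ?_, hsA.2.2, ?_, l, hlpos, fun k h1 h2 h3 =>
    (hmaxall k h1 h2 h3).trans hJs⟩
  · -- positivity
    refine lt_of_le_of_ne (hsA.1 v).1 fun h0 => hWne ?_
    apply hW
    refine measure_mono_null (t := ((ℝ ∙ (v : E))ᗮ : Submodule ℝ E)) ?_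
      (Measure.addHaar_submodule _ _ ?_)
    · intro x hx
      rw [← hws] at hx
      have h1 := wulff_abs hsA.2.2 hx v
      rw [← h0] at h1
      have h2 := abs_nonpos_iff.1 h1
      rw [SetLike.mem_coe, Submodule.mem_orthogonal_singleton_iff_inner_right, real_inner_comm]
      exact h2
    · intro htop
      have : (v : E) ∈ ((ℝ ∙ (v : E))ᗮ : Submodule ℝ E) := by rw [htop]; trivial
      rw [Submodule.mem_orthogonal_singleton_iff_inner_right, real_inner_self_eq_norm_sq,
        norm_sph] at this
      norm_num at this
  · rw [hws]; exact hsatt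

end Exist
end GDM

set_option linter.all false

namespace GDM

section Var
open Module
variable {E : Type*} [NormedAddCommGroup E] [InnerProductSpace ℝ E] [FiniteDimensional ℝ E] [MeasurableSpace E] [BorelSpace E]

/-- Gauge of the Wulff shape of `1 / w`. -/
noncomputable def NN (w : sphere (0 : E) 1 → ℝ) (x : E) : ℝ :=
  ⨆ v : sphere (0 : E) 1, ⟪x, (v : E)⟫ * w v

lemma NN_bdd {w : sphere (0 : E) 1 → ℝ} (hw : Continuous w) (x : E) :
    BddAbove (range fun v : sphere (0 : E) 1 => ⟪x, (v : E)⟫ * w v) :=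
  (isCompact_range (by fun_prop)).bddAbove

lemma le_NN {w : sphere (0 : E) 1 → ℝ} (hw : Continuous w) (x : E) (v : sphere (0 : E) 1) :
    ⟪x, (v : E)⟫ * w v ≤ NN w x := le_ciSup (NN_bdd hw x) v

lemma NN_att {w : sphere (0 : E) 1 → ℝ} (hw : Continuous w) [Nonempty (sphere (0 : E) 1)] (x : E) :
    ∃ v : sphere (0 : E) 1, NN w x = ⟪x, (v : E)⟫ * w v := by
  obtain ⟨v, -, hv⟩ := isCompact_univ.exists_sSup_image_eq (univ_nonempty (α := sphere (0 : E) 1))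
    (f := fun v : sphere (0 : E) 1 => ⟪x, (v : E)⟫ * w v)
    (Continuous.continuousOn (by fun_prop))
  refine ⟨v, ?_⟩
  rw [image_univ] at hv
  exact hv

lemma NN_gauge {w : sphere (0 : E) 1 → ℝ} (hw : Continuous w) (hpos : ∀ v, 0 < w v)
    [Nonempty (sphere (0 : E) 1)] : IsGauge (NN w) := by
  refine ⟨?_, ?_, ?_⟩
  · intro t ht x
    rw [NN, NN, Real.mul_iSup_of_nonneg ht]
    congr 1
    funext v
    rw [inner_smul_left]
    simp [mul_assoc]
  · obtain ⟨v1, -, hv1⟩ := isCompact_univ.exists_isMaxOn (univ_nonempty (α := sphere (0 : E) 1))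
      hw.continuousOn
    have key : ∀ x y, NN w x - NN w y ≤ w v1 * ‖x - y‖ := by
      intro x y
      obtain ⟨v, hv⟩ := NN_att hw x
      have h1 := le_NN hw y v
      have h2 : ⟪x, (v : E)⟫ - ⟪y, (v : E)⟫ ≤ ‖x - y‖ := by
        have := real_inner_le_norm (x - y) (v : E)
        rwa [inner_sub_left, norm_sph, mul_one] at this
      have h3 : w v ≤ w v1 := hv1 (mem_univ v)
      have h4 := hpos v
      rw [hv]
      nlinarith [norm_nonneg (x - y)]
    refine ⟨(w v1).toNNReal, LipschitzWith.of_dist_le_mul fun x y => ?_⟩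
    rw [Real.coe_toNNReal _ (hpos v1).le, Real.dist_eq, dist_eq_norm, abs_le]
    have h1 := key x y
    have h2 := key y x
    rw [norm_sub_rev y x] at h2
    exact ⟨by linarith, h1⟩
  · obtain ⟨v1, -, hv1⟩ := isCompact_univ.exists_isMinOn (univ_nonempty (α := sphere (0 : E) 1))
      hw.continuousOn
    refine ⟨w v1, hpos v1, fun x => ?_⟩
    by_cases h0 : x = 0
    · obtain ⟨v, hv⟩ := NN_att hw x
      rw [hv, h0]; simp
    · obtain ⟨v, hv⟩ := exists_dir x h0
      have h2 : ⟪x, (v : E)⟫ = ‖x‖ := by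
        conv_lhs => rw [hv]
        rw [inner_smul_left, real_inner_self_eq_norm_sq, norm_sph]; simp
      have h3 := le_NN hw x v
      rw [h2] at h3
      have h4 : w v1 ≤ w v := hv1 (mem_univ v)
      nlinarith [norm_nonneg x]

lemma wulff_eq {h : sphere (0 : E) 1 → ℝ} (hh : Continuous h) (hpos : ∀ v, 0 < h v)
    [Nonempty (sphere (0 : E) 1)] : wulff h = {x | NN (fun v => (h v)⁻¹) x ≤ 1} := by
  have hc : Continuous fun v => (h v)⁻¹ := hh.inv₀ fun v => (hpos v).ne'
  ext x
  constructor
  · intro hx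
    obtain ⟨v, hv⟩ := NN_att hc x
    show NN _ x ≤ 1
    rw [hv, ← div_eq_mul_inv, div_le_one (hpos v)]
    exact hx v
  · intro hx v
    have hx : NN _ x ≤ 1 := hx
    have := (le_NN hc x v).trans hx
    rwa [← div_eq_mul_inv, div_le_one (hpos v)] at this

/-- Maximisers are normals. -/
lemma isNormal_of_max {h : sphere (0 : E) 1 → ℝ} (hh : Continuous h) (hpos : ∀ v, 0 < h v)
    [Nonempty (sphere (0 : E) 1)] {u : E} (hu : 0 < NN (fun v => (h v)⁻¹) u) {v : sphere (0 : E) 1}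
    (hv : NN (fun v => (h v)⁻¹) u = ⟪u, (v : E)⟫ * (h v)⁻¹) :
    IsNormal (NN (fun v => (h v)⁻¹)) ((NN (fun v => (h v)⁻¹) u)⁻¹ • u) v := by
  have hc : Continuous fun v => (h v)⁻¹ := hh.inv₀ fun v => (hpos v).ne'
  refine ⟨norm_sph v, fun y => ?_⟩
  have h1 := le_NN hc y v
  have h2 : ⟪(NN (fun v => (h v)⁻¹) u)⁻¹ • u, (v : E)⟫ = h v := by
    rw [inner_smul_left]
    simp only [conj_trivial]
    have := hpos v
    rw [eq_comm, ← div_eq_mul_inv, div_eq_iff this.ne'] at hv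
    rw [hv, inv_mul_cancel_left₀ hu.ne']
  rw [h2]
  rwa [← div_eq_mul_inv, div_le_iff₀ (hpos v)] at h1

lemma max_unique {h : sphere (0 : E) 1 → ℝ} (hh : Continuous h) (hpos : ∀ v, 0 < h v)
    [Nonempty (sphere (0 : E) 1)] {u : E} (hu : u ≠ 0)
    (hd : DifferentiableAt ℝ (NN (fun v => (h v)⁻¹)) u) {v v' : sphere (0 : E) 1}
    (hv : NN (fun v => (h v)⁻¹) u = ⟪u, (v : E)⟫ * (h v)⁻¹)
    (hv' : NN (fun v => (h v)⁻¹) u = ⟪u, (v' : E)⟫ * (h v')⁻¹) : v = v' := by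
  have hc : Continuous fun v => (h v)⁻¹ := hh.inv₀ fun v => (hpos v).ne'
  have hg := NN_gauge hc (fun v => inv_pos.2 (hpos v))
  have gu := hg.pos_of_ne hu
  have n1 := isNormal_of_max hh hpos gu hv
  have n2 := isNormal_of_max hh hpos gu hv'
  apply Subtype.ext
  refine normal_unique hg ?_ ?_ n1 n2
  · rw [hg.hom _ (inv_pos.2 gu).le, inv_mul_cancel₀ gu.ne']
  · refine diff_smul hg gu ?_
    rwa [smul_smul, mul_inv_cancel₀ gu.ne', one_smul]

lemma danskin {h ψ : sphere (0 : E) 1 → ℝ} (hh : Continuous h) (hpos : ∀ v, 0 < h v)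
    (hψ : Continuous ψ) [Nonempty (sphere (0 : E) 1)] {u : E} (hu : u ≠ 0) {v0 : sphere (0 : E) 1}
    (hv0 : NN (fun v => (h v)⁻¹) u = ⟪u, (v0 : E)⟫ * (h v0)⁻¹)
    (huniq : ∀ v : sphere (0 : E) 1, NN (fun v => (h v)⁻¹) u = ⟪u, (v : E)⟫ * (h v)⁻¹ → v = v0) :
    HasDerivAt (fun t : ℝ => NN (fun v => (1 - t * ψ v) * (h v)⁻¹) u)
      (-ψ v0 * NN (fun v => (h v)⁻¹) u) 0 := by
  have hc : Continuous fun v => (h v)⁻¹ := hh.inv₀ fun v => (hpos v).ne'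
  have hg := NN_gauge hc (fun v => inv_pos.2 (hpos v))
  have gu := hg.pos_of_ne hu
  set G := NN (fun v => (h v)⁻¹) u with hG
  have hct : ∀ t : ℝ, Continuous fun v => (1 - t * ψ v) * (h v)⁻¹ := fun t => by fun_prop
  obtain ⟨v1, -, hv1⟩ := isCompact_univ.exists_isMaxOn (univ_nonempty (α := sphere (0 : E) 1))
      hψ.abs.continuousOn
  rw [hasDerivAt_iff_isLittleO, Asymptotics.isLittleO_iff]
  intro c hc0
  have hev : ∀ᶠ t : ℝ in 𝓝 0, ∀ v ∈ (univ : Set (sphere (0 : E) 1)), |ψ v - ψ v0| < c / G ∨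
      ⟪u, (v : E)⟫ * ((1 - t * ψ v) * (h v)⁻¹) < G * (1 - t * ψ v0) := by
    refine isCompact_univ.eventually_forall_of_forall_eventually fun v _ => ?_
    by_cases hv : v = v0
    · have h1 : Continuous fun z : ℝ × sphere (0 : E) 1 => |ψ z.2 - ψ v0| := by fun_prop
      have h2 : ∀ᶠ z : ℝ × sphere (0 : E) 1 in 𝓝 (0, v), |ψ z.2 - ψ v0| < c / G :=
        h1.continuousAt.eventually (gt_mem_nhds (by simp [hv]; positivity))
      exact h2.mono fun z hz => Or.inl hz
    · have h1 : Continuous fun z : ℝ × sphere (0 : E) 1 =>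
          ⟪u, (z.2 : E)⟫ * ((1 - z.1 * ψ z.2) * (h z.2)⁻¹) - G * (1 - z.1 * ψ v0) := by
        have : Continuous fun z : ℝ × sphere (0 : E) 1 => (h z.2)⁻¹ := hc.comp continuous_snd
        fun_prop
      have h3 : ⟪u, (v : E)⟫ * (h v)⁻¹ < G :=
        lt_of_le_of_ne (le_NN hc u v) fun he => hv (huniq v he.symm)
      have h2 : ∀ᶠ z : ℝ × sphere (0 : E) 1 in 𝓝 (0, v),
          ⟪u, (z.2 : E)⟫ * ((1 - z.1 * ψ z.2) * (h z.2)⁻¹) - G * (1 - z.1 * ψ v0) < 0 :=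
        h1.continuousAt.eventually (gt_mem_nhds (by simpa using h3))
      exact h2.mono fun z hz => Or.inr (by linarith)
  have hball : ∀ᶠ t : ℝ in 𝓝 0, |t| * |ψ v1| < 1 := by
    have : Continuous fun t : ℝ => |t| * |ψ v1| := by fun_prop
    exact this.continuousAt.eventually (gt_mem_nhds (by simp))
  filter_upwards [hev, hball] with t ht htb
  have e0 : NN (fun v => (1 - 0 * ψ v) * (h v)⁻¹) u = G := by simp [hG]
  rw [e0, sub_zero, smul_eq_mul, Real.norm_eq_abs, Real.norm_eq_abs]
  have hlow : G * (1 - t * ψ v0) ≤ NN (fun v => (1 - t * ψ v) * (h v)⁻¹) u := by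
    have := le_NN (hct t) u v0
    rw [hv0]
    calc _ = _ := by ring
      _ ≤ _ := this
  obtain ⟨v, hv⟩ := NN_att (hct t) u
  have hψv : |ψ v - ψ v0| < c / G := by
    rcases ht v (mem_univ v) with h1 | h1
    · exact h1
    · linarith
  have hup : NN (fun v => (1 - t * ψ v) * (h v)⁻¹) u ≤ G * (1 - t * ψ v) := by
    have h1 : ⟪u, (v : E)⟫ * (h v)⁻¹ ≤ G := le_NN hc u v
    have h2 : 0 ≤ 1 - t * ψ v := by
      have h3 : |ψ v| ≤ |ψ v1| := hv1 (mem_univ v)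
      have h4 : t * ψ v ≤ |t| * |ψ v| := by rw [← abs_mul]; exact le_abs_self _
      nlinarith [abs_nonneg t]
    rw [hv]
    nlinarith
  have h5 : G * |t * (ψ v - ψ v0)| ≤ c * |t| := by
    rw [lt_div_iff₀ gu] at hψv
    rw [abs_mul]
    nlinarith [abs_nonneg t]
  have h6 := neg_abs_le (t * (ψ v - ψ v0))
  rw [abs_le]
  constructor
  · have : 0 ≤ c * |t| := by positivity
    nlinarith
  · nlinarith

end Var
end GDM

set_option linter.all false

namespace GDM

section Var2
open Module
variable {E : Type*} [NormedAddCommGroup E] [InnerProductSpace ℝ E] [FiniteDimensional ℝ E]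
  [MeasurableSpace E] [BorelSpace E]

lemma NN_close {w w' : sphere (0 : E) 1 → ℝ} (hw : Continuous w) (hw' : Continuous w')
    [Nonempty (sphere (0 : E) 1)] {ε : ℝ} (hε : ∀ v, |w v - w' v| ≤ ε) (u : sphere (0 : E) 1) :
    NN w u ≤ NN w' u + ε := by
  obtain ⟨v, hv⟩ := NN_att hw (u : E)
  have h1 := le_NN hw' (u : E) v
  have h2 : |⟪(u : E), (v : E)⟫ * (w v - w' v)| ≤ 1 * ε := by
    rw [abs_mul]
    refine mul_le_mul ?_ (hε v) (abs_nonneg _) zero_le_one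
    have := abs_real_inner_le_norm (u : E) (v : E)
    rwa [norm_sph, norm_sph, mul_one] at this
  have h3 := le_abs_self (⟪(u : E), (v : E)⟫ * (w v - w' v))
  rw [hv]
  nlinarith

lemma NN_ge {w : sphere (0 : E) 1 → ℝ} (hw : Continuous w) {c : ℝ} (hc : ∀ v, c ≤ w v)
    (u : sphere (0 : E) 1) : c ≤ NN w u := by
  have h1 := le_NN hw (u : E) u
  rw [real_inner_self_eq_norm_sq, norm_sph] at h1
  linarith [hc u]

lemma Phi_lip {q : ℝ} (hq : 1 < q) (R : ℝ) : ∃ B : ℝ, 0 ≤ B ∧ ∀ a ∈ Icc 0 R, ∀ b ∈ Icc 0 R,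
    |Phi q b - Phi q a| ≤ B * |b - a| := by
  obtain ⟨B, hB⟩ := (isCompact_Icc (a := (0:ℝ)) (b := R)).exists_bound_of_continuousOn
    (phi_cont hq).continuousOn
  refine ⟨max B 0, le_max_right _ _, fun a ha b hb => ?_⟩
  exact (convex_Icc (0:ℝ) R).norm_image_sub_le_of_norm_hasDerivWithin_le
    (fun x _ => (Phi_deriv hq x).hasDerivWithinAt) (fun x hx => (hB x hx).trans (le_max_left _ _)) ha hb

lemma wt_cont {h ψ : sphere (0 : E) 1 → ℝ} (hh : Continuous h) (hpos : ∀ v, 0 < h v)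
    (hψ : Continuous ψ) (t : ℝ) : Continuous fun v => (1 - t * ψ v) * (h v)⁻¹ := by
  have hc : Continuous fun v => (h v)⁻¹ := hh.inv₀ fun v => (hpos v).ne'
  fun_prop

lemma half_le {C t x : ℝ} (hC : 0 < C) (hx : |x| ≤ C) (ht : |t| < 1 / (2 * C)) :
    1 / 2 ≤ 1 - t * x := by
  have h1 : |t * x| ≤ 1 / (2 * C) * C := by
    rw [abs_mul]; exact mul_le_mul ht.le hx (abs_nonneg _) (by positivity)
  have h2 : 1 / (2 * C) * C = 1 / 2 := by field_simp
  have := le_abs_self (t * x)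
  linarith

lemma half_le' {C t x : ℝ} (hC : 0 < C) (hx : |x| ≤ C) (ht : |t| < 1 / (2 * C)) :
    1 - t * x ≤ 2 := by
  have h1 : |t * x| ≤ 1 / (2 * C) * C := by
    rw [abs_mul]; exact mul_le_mul ht.le hx (abs_nonneg _) (by positivity)
  have h2 : 1 / (2 * C) * C = 1 / 2 := by field_simp
  have := neg_abs_le (t * x)
  linarith

lemma vol_deriv {h ψ : sphere (0 : E) 1 → ℝ} (hh : Continuous h) (hpos : ∀ v, 0 < h v)
    (hψ : Continuous ψ) [Nonempty (sphere (0 : E) 1)] (d : ℕ) (hd : finrank ℝ E = d + 1)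
    {q : ℝ} (hq : 1 < q) {α : sphere (0 : E) 1 → sphere (0 : E) 1} (hα : Measurable α)
    (hmax : ∀ u : sphere (0 : E) 1, NN (fun v => (h v)⁻¹) u = ⟪(u : E), (α u : E)⟫ * (h (α u))⁻¹)
    {C : ℝ} (hC : 0 < C) (hψC : ∀ v, |ψ v| ≤ C) :
    HasDerivAt (fun t : ℝ => ∫ u : sphere (0 : E) 1,
        Phi q (NN (fun v => (1 - t * ψ v) * (h v)⁻¹) u)⁻¹ ∂(volume : Measure E).toSphere)
      (∫ u : sphere (0 : E) 1, phi q (NN (fun v => (h v)⁻¹) u)⁻¹ *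
        ((NN (fun v => (h v)⁻¹) u)⁻¹ * ψ (α u)) ∂(volume : Measure E).toSphere) 0 := by
  have hc : Continuous fun v => (h v)⁻¹ := hh.inv₀ fun v => (hpos v).ne'
  have hwpos : ∀ v, 0 < (h v)⁻¹ := fun v => inv_pos.2 (hpos v)
  have hg := NN_gauge hc hwpos
  obtain ⟨v0, -, hv0⟩ := isCompact_univ.exists_isMinOn (univ_nonempty (α := sphere (0 : E) 1))
      hc.continuousOn
  obtain ⟨v1, -, hv1⟩ := isCompact_univ.exists_isMaxOn (univ_nonempty (α := sphere (0 : E) 1))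
      hc.continuousOn
  set w0 := (h v0)⁻¹ with hw0
  set w1 := (h v1)⁻¹ with hw1
  have w0p : 0 < w0 := hwpos v0
  have w1p : 0 < w1 := hwpos v1
  have hle0 : ∀ v, w0 ≤ (h v)⁻¹ := fun v => hv0 (mem_univ v)
  have hle1 : ∀ v, (h v)⁻¹ ≤ w1 := fun v => hv1 (mem_univ v)
  have hball : ball (0:ℝ) (1 / (2 * C)) ∈ 𝓝 (0:ℝ) := ball_mem_nhds _ (by positivity)
  have hmem : ∀ t ∈ ball (0:ℝ) (1 / (2 * C)), |t| < 1 / (2 * C) := fun t ht => by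
    simpa using ht
  have hge : ∀ t ∈ ball (0:ℝ) (1 / (2 * C)), ∀ u : sphere (0 : E) 1,
      w0 / 2 ≤ NN (fun v => (1 - t * ψ v) * (h v)⁻¹) u := by
    intro t ht u
    refine NN_ge (wt_cont hh hpos hψ t) (fun v => ?_) u
    have h1 := half_le hC (hψC v) (hmem t ht)
    have h2 := hle0 v
    nlinarith
  have hcontN : ∀ t ∈ ball (0:ℝ) (1 / (2 * C)), Continuous fun u : sphere (0 : E) 1 =>
      Phi q (NN (fun v => (1 - t * ψ v) * (h v)⁻¹) u)⁻¹ := by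
    intro t ht
    have g1 := NN_gauge (wt_cont hh hpos hψ t) (fun v => by
      have h1 := half_le hC (hψC v) (hmem t ht)
      have h2 := hwpos v
      have : 0 < 1 - t * ψ v := by linarith
      positivity)
    have c1 : Continuous (Phi q) := continuous_iff_continuousAt.2 fun r => (Phi_deriv hq r).continuousAt
    refine c1.comp (Continuous.inv₀ (g1.cont.comp continuous_subtype_val) fun u => ?_)
    have := hge t ht u
    exact (by linarith : 0 < NN (fun v => (1 - t * ψ v) * (h v)⁻¹) u).ne'
  obtain ⟨B, hB0, hB⟩ := Phi_lip hq (2 / w0)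
  have hinv : ∀ t ∈ ball (0:ℝ) (1 / (2 * C)), ∀ u : sphere (0 : E) 1,
      (NN (fun v => (1 - t * ψ v) * (h v)⁻¹) u)⁻¹ ∈ Icc 0 (2 / w0) := by
    intro t ht u
    have := hge t ht u
    have hp : 0 < NN (fun v => (1 - t * ψ v) * (h v)⁻¹) u := by linarith
    refine ⟨by positivity, ?_⟩
    rw [inv_le_comm₀ hp (by positivity), inv_div]
    exact this
  have hclose : ∀ t s : ℝ, ∀ u : sphere (0 : E) 1,
      |NN (fun v => (1 - t * ψ v) * (h v)⁻¹) u - NN (fun v => (1 - s * ψ v) * (h v)⁻¹) u| ≤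
        |t - s| * C * w1 := by
    have key : ∀ t s : ℝ, ∀ v, |(1 - t * ψ v) * (h v)⁻¹ - (1 - s * ψ v) * (h v)⁻¹| ≤ |t - s| * C * w1 := by
      intro t s v
      have : (1 - t * ψ v) * (h v)⁻¹ - (1 - s * ψ v) * (h v)⁻¹ = -((t - s) * ψ v * (h v)⁻¹) := by ring
      rw [this, abs_neg, abs_mul, abs_mul, abs_of_pos (hwpos v)]
      refine mul_le_mul ?_ (hle1 v) (hwpos v).le (by positivity)
      exact mul_le_mul_of_nonneg_left (hψC v) (abs_nonneg _)
    intro t s u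
    have h1 := NN_close (wt_cont hh hpos hψ t) (wt_cont hh hpos hψ s) (key t s) u
    have h2 := NN_close (wt_cont hh hpos hψ s) (wt_cont hh hpos hψ t) (key s t) u
    rw [abs_sub_comm s t] at h2
    rw [abs_le]
    constructor <;> linarith
  refine (hasDerivAt_integral_of_dominated_loc_of_lip (bound := fun _ => B * ((2 / w0) * (2 / w0) * (C * w1)))
    hball (Filter.eventually_of_mem hball fun t ht => ?_) ?_ ?_ ?_ (integrable_const _) ?_).2
  · exact (hcontN t ht).aestronglyMeasurable
  · exact (hcontN 0 (mem_of_mem_nhds hball)).integrable_of_hasCompactSupport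
      (HasCompactSupport.of_compactSpace _)
  · have m1 : Measurable fun u : sphere (0 : E) 1 => (NN (fun v => (h v)⁻¹) (u : E))⁻¹ :=
      (hg.cont.measurable.comp measurable_subtype_coe).inv
    have m2 : Measurable fun u : sphere (0 : E) 1 => ψ (α u) := hψ.measurable.comp hα
    exact (((phi_cont hq).measurable.comp m1).mul (m1.mul m2)).aestronglyMeasurable
  · refine ae_of_all _ fun u => LipschitzOnWith.of_dist_le_mul fun t ht s hs => ?_
    rw [Real.coe_nnabs, Real.dist_eq, Real.dist_eq,
      abs_of_nonneg (by positivity : 0 ≤ B * ((2 / w0) * (2 / w0) * (C * w1)))]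
    have a1 := hge t ht u
    have a2 := hge s hs u
    have i1 := hinv t ht u
    have i2 := hinv s hs u
    refine (hB _ i2 _ i1).trans ?_
    rw [mul_assoc]
    refine mul_le_mul_of_nonneg_left ?_ hB0
    have p1 : 0 < NN (fun v => (1 - t * ψ v) * (h v)⁻¹) u := by linarith
    have p2 : 0 < NN (fun v => (1 - s * ψ v) * (h v)⁻¹) u := by linarith
    have cl := hclose s t u
    set X := NN (fun v => (1 - t * ψ v) * (h v)⁻¹) u
    set Y := NN (fun v => (1 - s * ψ v) * (h v)⁻¹) u
    have e : X⁻¹ - Y⁻¹ = X⁻¹ * Y⁻¹ * (Y - X) := by field_simp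
    rw [e, abs_mul, abs_of_nonneg (mul_nonneg i1.1 i2.1), mul_assoc (2 / w0 * (2 / w0))]
    refine mul_le_mul (mul_le_mul i1.2 i2.2 i2.1 (by positivity)) ?_ (abs_nonneg _) (by positivity)
    refine cl.trans (le_of_eq ?_)
    rw [abs_sub_comm]; ring
  · filter_upwards [sphere_diff hg d hd] with u hu
    have D := danskin hh hpos hψ (sph_ne u) (hmax u) fun v hv =>
      max_unique hh hpos (sph_ne u) hu hv (hmax u)
    have gu := hg.pos_of_ne (sph_ne u)
    have e0 : NN (fun v => (1 - 0 * ψ v) * (h v)⁻¹) (u : E) = NN (fun v => (h v)⁻¹) (u : E) := by simp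
    have D2 := D.fun_inv (by rw [e0]; exact gu.ne')
    have D3 := (Phi_deriv hq _).comp (0:ℝ) D2
    refine HasDerivAt.congr_deriv D3 ?_
    rw [e0]
    field_simp

end Var2
end GDM

set_option linter.all false

namespace GDM

section Var3
open Module
variable {E : Type*} [NormedAddCommGroup E] [InnerProductSpace ℝ E] [FiniteDimensional ℝ E]
  [MeasurableSpace E] [BorelSpace E]

lemma pw_deriv {h ψ : sphere (0 : E) 1 → ℝ} (hh : Continuous h) (hpos : ∀ v, 0 < h v)
    (hψ : Continuous ψ) [Nonempty (sphere (0 : E) 1)] (m : Measure (sphere (0 : E) 1))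
    [IsFiniteMeasure m] {p : ℝ} (hp : 1 < p) {C : ℝ} (hC : 0 < C) (hψC : ∀ v, |ψ v| ≤ C) :
    HasDerivAt (fun t : ℝ => ∫ v, ((1 - t * ψ v) * (h v)⁻¹)⁻¹ ^ p ∂m)
      (∫ v, p * (ψ v * h v ^ p) ∂m) 0 := by
  obtain ⟨v1, -, hv1⟩ := isCompact_univ.exists_isMaxOn (univ_nonempty (α := sphere (0 : E) 1))
      hh.continuousOn
  have hle1 : ∀ v, h v ≤ h v1 := fun v => hv1 (mem_univ v)
  have hball : ball (0:ℝ) (1 / (2 * C)) ∈ 𝓝 (0:ℝ) := ball_mem_nhds _ (by positivity)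
  have hmem : ∀ t ∈ ball (0:ℝ) (1 / (2 * C)), |t| < 1 / (2 * C) := fun t ht => by
    simpa using ht
  have hpt : ∀ t ∈ ball (0:ℝ) (1 / (2 * C)), ∀ v, 0 < 1 - t * ψ v := fun t ht v => by
    have := half_le hC (hψC v) (hmem t ht)
    linarith
  have hcp : Continuous fun v => h v ^ p := hh.rpow_const fun v => Or.inr (by linarith)
  have hcont : ∀ t ∈ ball (0:ℝ) (1 / (2 * C)), Continuous fun v =>
      ((1 - t * ψ v) * (h v)⁻¹)⁻¹ ^ p := by
    intro t ht
    refine Continuous.rpow_const ?_ fun v => Or.inr (by linarith)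
    refine (wt_cont hh hpos hψ t).inv₀ fun v => ?_
    have := hpt t ht v
    have := hpos v
    positivity
  have key := (hasDerivAt_integral_of_dominated_loc_of_deriv_le (μ := m)
    (F := fun t v => ((1 - t * ψ v) * (h v)⁻¹)⁻¹ ^ p)
    (F' := fun t v => p * ψ v * (1 - t * ψ v) ^ (-p - 1) * h v ^ p)
    (bound := fun _ => p * C * (1 / 2 : ℝ) ^ (-p - 1) * h v1 ^ p)
    hball (Filter.eventually_of_mem hball fun t ht => (hcont t ht).aestronglyMeasurable)
    ((hcont 0 (mem_of_mem_nhds hball)).integrable_of_hasCompactSupport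
      (HasCompactSupport.of_compactSpace _)) ?_ ?_ (integrable_const _) ?_).2
  · refine HasDerivAt.congr_deriv key ?_
    refine integral_congr_ae (ae_of_all _ fun v => ?_)
    simp [mul_assoc]
  · simp only [zero_mul, sub_zero, Real.one_rpow, mul_one]
    exact (by fun_prop : Continuous fun v => p * ψ v * h v ^ p).aestronglyMeasurable
  · refine ae_of_all _ fun v t ht => ?_
    have h1 := half_le hC (hψC v) (hmem t ht)
    have h2 : 0 < 1 - t * ψ v := by linarith
    have h3 := hpos v
    rw [Real.norm_eq_abs, abs_mul, abs_mul, abs_mul, abs_of_pos (by linarith : 0 < p),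
      abs_of_nonneg (by positivity : 0 ≤ (1 - t * ψ v) ^ (-p - 1)),
      abs_of_nonneg (by positivity : 0 ≤ h v ^ p)]
    have h4 : (1 - t * ψ v) ^ (-p - 1) ≤ (1 / 2 : ℝ) ^ (-p - 1) :=
      Real.rpow_le_rpow_of_nonpos (by norm_num) h1 (by linarith)
    have h5 : h v ^ p ≤ h v1 ^ p := Real.rpow_le_rpow h3.le (hle1 v) (by linarith)
    gcongr
    exact hψC v
  · refine ae_of_all _ fun v t ht => ?_
    have h2 := hpt t ht v
    have h3 := hpos v
    have e : ∀ s ∈ ball (0:ℝ) (1 / (2 * C)),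
        ((1 - s * ψ v) * (h v)⁻¹)⁻¹ ^ p = (1 - s * ψ v) ^ (-p) * h v ^ p := by
      intro s hs
      have h2 := hpt s hs v
      rw [mul_inv, inv_inv, Real.mul_rpow (by positivity) h3.le, Real.inv_rpow h2.le,
        Real.rpow_neg h2.le]
    have D1 : HasDerivAt (fun s : ℝ => 1 - s * ψ v) (-ψ v) t := by
      simpa using ((hasDerivAt_id t).mul_const (ψ v)).const_sub 1
    have D2 := (D1.rpow_const (p := -p) (Or.inl h2.ne')).mul_const (h v ^ p)
    have D3 := D2.congr_of_eventuallyEq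
      (Filter.eventually_of_mem (isOpen_ball.mem_nhds ht) e)
    refine HasDerivAt.congr_deriv D3 ?_
    ring

/-- Euler-Lagrange for even test functions. -/
lemma EL_even {h ψ : sphere (0 : E) 1 → ℝ} (hh : Continuous h) (hpos : ∀ v, 0 < h v)
    (hev : ∀ v, h (-v) = h v) (hψ : Continuous ψ) (hψe : ∀ v, ψ (-v) = ψ v)
    [Nonempty (sphere (0 : E) 1)] (d : ℕ) (hd : finrank ℝ E = d + 1)
    (m : Measure (sphere (0 : E) 1)) [IsFiniteMeasure m] {p q l : ℝ} (hp : 1 < p)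
    (hq : 1 < q) {α : sphere (0 : E) 1 → sphere (0 : E) 1} (hα : Measurable α)
    (hmax : ∀ u : sphere (0 : E) 1, NN (fun v => (h v)⁻¹) u = ⟪(u : E), (α u : E)⟫ * (h (α u))⁻¹)
    (hJ : ∀ k : sphere (0 : E) 1 → ℝ, Continuous k → (∀ v, 0 < k v) → (∀ v, k (-v) = k v) →
      JJ (wvol E d q) m p l k ≤ JJ (wvol E d q) m p l h) :
    ∫ u : sphere (0 : E) 1, phi q (NN (fun v => (h v)⁻¹) u)⁻¹ *
        ((NN (fun v => (h v)⁻¹) u)⁻¹ * ψ (α u)) ∂(volume : Measure E).toSphere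
      = l * ∫ v, p * (ψ v * h v ^ p) ∂m := by
  obtain ⟨v1, -, hv1⟩ := isCompact_univ.exists_isMaxOn (univ_nonempty (α := sphere (0 : E) 1))
      hψ.abs.continuousOn
  obtain ⟨C, hC, hψC⟩ : ∃ C : ℝ, 0 < C ∧ ∀ v, |ψ v| ≤ C :=
    ⟨|ψ v1| + 1, by positivity, fun v => by
      have : |ψ v| ≤ |ψ v1| := hv1 (mem_univ v)
      linarith⟩
  have D := (vol_deriv hh hpos hψ d hd hq hα hmax hC hψC).sub
    ((pw_deriv hh hpos hψ m hp hC hψC).const_mul l)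
  have hball : ball (0:ℝ) (1 / (2 * C)) ∈ 𝓝 (0:ℝ) := ball_mem_nhds _ (by positivity)
  have hmem : ∀ t ∈ ball (0:ℝ) (1 / (2 * C)), |t| < 1 / (2 * C) := fun t ht => by
    simpa using ht
  have hpt : ∀ t ∈ ball (0:ℝ) (1 / (2 * C)), ∀ v, 0 < 1 - t * ψ v := fun t ht v => by
    have := half_le hC (hψC v) (hmem t ht)
    linarith
  have hJe : ∀ t ∈ ball (0:ℝ) (1 / (2 * C)),
      JJ (wvol E d q) m p l (fun v => ((1 - t * ψ v) * (h v)⁻¹)⁻¹) =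
      (∫ u : sphere (0 : E) 1,
        Phi q (NN (fun v => (1 - t * ψ v) * (h v)⁻¹) u)⁻¹ ∂(volume : Measure E).toSphere) -
      l * ∫ v, ((1 - t * ψ v) * (h v)⁻¹)⁻¹ ^ p ∂m := by
    intro t ht
    have wp : ∀ v, 0 < (1 - t * ψ v) * (h v)⁻¹ := fun v =>
      mul_pos (hpt t ht v) (inv_pos.2 (hpos v))
    have wc := wt_cont hh hpos hψ t
    have g1 := NN_gauge wc wp
    rw [JJ, wulff_eq (h := fun v => ((1 - t * ψ v) * (h v)⁻¹)⁻¹) (wc.inv₀ fun v => (wp v).ne') fun v => inv_pos.2 (wp v)]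
    simp only [inv_inv]
    congr 1
    rw [wvol_gauge g1 d hd hq, integral_eq_lintegral_of_nonneg_ae]
    · exact ae_of_all _ fun u => Phi_nonneg (inv_nonneg.2 (g1.pos_of_ne (sph_ne u)).le)
    · have c1 : Continuous (Phi q) :=
        continuous_iff_continuousAt.2 fun r => (Phi_deriv hq r).continuousAt
      exact (c1.comp (Continuous.inv₀ (g1.cont.comp continuous_subtype_val) fun u =>
        (g1.pos_of_ne (sph_ne u)).ne')).aestronglyMeasurable
  have hmaxloc : IsLocalMax (fun t : ℝ => (∫ u : sphere (0 : E) 1,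
        Phi q (NN (fun v => (1 - t * ψ v) * (h v)⁻¹) u)⁻¹ ∂(volume : Measure E).toSphere) -
      l * ∫ v, ((1 - t * ψ v) * (h v)⁻¹)⁻¹ ^ p ∂m) 0 := by
    filter_upwards [hball] with t ht
    show _ - _ ≤ _ - _
    rw [← hJe t ht, ← hJe 0 (mem_of_mem_nhds hball)]
    have e0 : (fun v => ((1 - 0 * ψ v) * (h v)⁻¹)⁻¹) = h := by funext v; simp
    rw [e0]
    have wp : ∀ v, 0 < (1 - t * ψ v) * (h v)⁻¹ := fun v =>
      mul_pos (hpt t ht v) (inv_pos.2 (hpos v))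
    refine hJ _ ((wt_cont hh hpos hψ t).inv₀ fun v => (wp v).ne') (fun v => inv_pos.2 (wp v))
      fun v => ?_
    simp only [hψe, hev]
  have := hmaxloc.hasDerivAt_eq_zero D
  linarith

end Var3
end GDM

set_option linter.all false

namespace GDM

section Sym
open Module
variable {E : Type*} [NormedAddCommGroup E] [InnerProductSpace ℝ E] [FiniteDimensional ℝ E]
  [MeasurableSpace E] [BorelSpace E]

lemma neg_cont : Continuous (fun u : sphere (0 : E) 1 => -u) :=
  Continuous.subtype_mk (continuous_subtype_val.neg) _

lemma ext_even (A B : Measure (sphere (0 : E) 1)) [IsFiniteMeasure A] [IsFiniteMeasure B]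
    (hA : MeasurePreserving (fun u : sphere (0 : E) 1 => -u) A A)
    (hB : MeasurePreserving (fun u : sphere (0 : E) 1 => -u) B B)
    (h : ∀ ψ : sphere (0 : E) 1 → ℝ, Continuous ψ → (∀ v, ψ (-v) = ψ v) →
      ∫ v, ψ v ∂A = ∫ v, ψ v ∂B) : A = B := by
  have key : ∀ (M : Measure (sphere (0 : E) 1)) [IsFiniteMeasure M]
      (hM : MeasurePreserving (fun u : sphere (0 : E) 1 => -u) M M)
      (ψ : sphere (0 : E) 1 → ℝ), Continuous ψ → ∫ v, (ψ v + ψ (-v)) ∂M = 2 * ∫ v, ψ v ∂M := by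
    intro M _ hM ψ hψ
    have h1 : Continuous fun v : sphere (0 : E) 1 => ψ (-v) := hψ.comp neg_cont
    have hi : ∀ k : sphere (0 : E) 1 → ℝ, Continuous k → Integrable k M := fun k hk =>
      hk.integrable_of_hasCompactSupport (HasCompactSupport.of_compactSpace _)
    rw [integral_add (hi _ hψ) (hi _ h1), two_mul]
    congr 1
    have := integral_map (μ := M) (φ := fun u : sphere (0 : E) 1 => -u) hM.measurable.aemeasurable
      (f := ψ) hψ.aestronglyMeasurable
    rw [hM.map_eq] at this
    exact this.symm
  refine ext_of_forall_integral_eq_of_IsFiniteMeasure fun ψ => ?_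
  have h1 := key A hA ψ ψ.continuous
  have h2 := key B hB ψ ψ.continuous
  have h3 := h (fun v => ψ v + ψ (-v)) (ψ.continuous.add (ψ.continuous.comp neg_cont)) fun v => by
    rw [neg_neg, add_comm]
  linarith

lemma sigma_neg : MeasurePreserving (fun u : sphere (0 : E) 1 => -u)
    (volume : Measure E).toSphere (volume : Measure E).toSphere := by
  refine ⟨neg_cont.measurable, ?_⟩
  ext s hs
  rw [Measure.map_apply neg_cont.measurable hs, Measure.toSphere_apply' _ hs,
    Measure.toSphere_apply' _ (neg_cont.measurable hs)]
  congr 1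
  rw [← Measure.measure_neg]
  congr 1
  ext x
  simp only [Set.mem_neg, Set.mem_smul, mem_image]
  constructor
  · rintro ⟨r, hr, _, ⟨u, hu, rfl⟩, hx⟩
    refine ⟨r, hr, _, ⟨-u, hu, rfl⟩, ?_⟩
    have : ((-u : sphere (0 : E) 1) : E) = -(u : E) := rfl
    rw [this, smul_neg, hx, neg_neg]
  · rintro ⟨r, hr, _, ⟨u, hu, rfl⟩, hx⟩
    refine ⟨r, hr, _, ⟨-u, by simpa using hu, rfl⟩, ?_⟩
    have : ((-u : sphere (0 : E) 1) : E) = -(u : E) := rfl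
    rw [this, smul_neg, hx]

lemma NN_neg {w : sphere (0 : E) 1 → ℝ} (hw : ∀ v, w (-v) = w v) (x : E) : NN w (-x) = NN w x := by
  unfold NN
  refine Function.Surjective.iSup_congr (fun v : sphere (0 : E) 1 => -v) neg_surjective fun v => ?_
  have : ((-v : sphere (0 : E) 1) : E) = -(v : E) := rfl
  rw [this, hw, inner_neg_left, inner_neg_right]

theorem EL_measure {h : sphere (0 : E) 1 → ℝ} (hh : Continuous h) (hpos : ∀ v, 0 < h v)
    (hev : ∀ v, h (-v) = h v)
    [Nonempty (sphere (0 : E) 1)] (d : ℕ) (hd : finrank ℝ E = d + 1)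
    (m : Measure (sphere (0 : E) 1)) [IsFiniteMeasure m]
    (hm : MeasurePreserving (fun u : sphere (0 : E) 1 => -u) m m) {p q l : ℝ} (hp : 1 < p)
    (hq : 1 < q) (hl : 0 < l) {α : sphere (0 : E) 1 → sphere (0 : E) 1} (hα : Measurable α)
    (hmax : ∀ u : sphere (0 : E) 1, NN (fun v => (h v)⁻¹) u = ⟪(u : E), (α u : E)⟫ * (h (α u))⁻¹)
    (hJ : ∀ k : sphere (0 : E) 1 → ℝ, Continuous k → (∀ v, 0 < k v) → (∀ v, k (-v) = k v) →
      JJ (wvol E d q) m p l k ≤ JJ (wvol E d q) m p l h) :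
    ((volume : Measure E).toSphere.withDensity (fun u => ENNReal.ofReal
      (phi q (NN (fun v => (h v)⁻¹) u)⁻¹ * (NN (fun v => (h v)⁻¹) u)⁻¹))).map α
      = m.withDensity (fun v => ENNReal.ofReal (l * p * h v ^ p)) := by
  have hc : Continuous fun v => (h v)⁻¹ := hh.inv₀ fun v => (hpos v).ne'
  have hwpos : ∀ v, 0 < (h v)⁻¹ := fun v => inv_pos.2 (hpos v)
  have hg := NN_gauge hc hwpos
  have hci : Continuous fun u : sphere (0 : E) 1 => (NN (fun v => (h v)⁻¹) (u : E))⁻¹ :=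
    Continuous.inv₀ (hg.cont.comp continuous_subtype_val) fun u => (hg.pos_of_ne (sph_ne u)).ne'
  have hcD : Continuous fun u : sphere (0 : E) 1 =>
      phi q (NN (fun v => (h v)⁻¹) (u : E))⁻¹ * (NN (fun v => (h v)⁻¹) (u : E))⁻¹ :=
    ((phi_cont hq).comp hci).mul hci
  have hDnn : ∀ u : sphere (0 : E) 1, 0 ≤
      phi q (NN (fun v => (h v)⁻¹) (u : E))⁻¹ * (NN (fun v => (h v)⁻¹) (u : E))⁻¹ := fun u =>
    have := inv_nonneg.2 (hg.pos_of_ne (sph_ne u)).le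
    mul_nonneg (phi_nonneg this) this
  have hcp : Continuous fun v => l * p * h v ^ p :=
    continuous_const.mul (hh.rpow_const fun v => Or.inr (by linarith))
  have hpnn : ∀ v, 0 ≤ l * p * h v ^ p := fun v => by
    have := hpos v
    have : 0 < p := by linarith
    positivity
  have hi : ∀ (M : Measure (sphere (0 : E) 1)) [IsFiniteMeasure M] (k : sphere (0 : E) 1 → ℝ),
      Continuous k → Integrable k M := fun M _ k hk =>
    hk.integrable_of_hasCompactSupport (HasCompactSupport.of_compactSpace _)
  have mD := hcD.measurable.ennreal_ofReal
  have mp := hcp.measurable.ennreal_ofReal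
  haveI : IsFiniteMeasure ((volume : Measure E).toSphere.withDensity (fun u => ENNReal.ofReal
      (phi q (NN (fun v => (h v)⁻¹) u)⁻¹ * (NN (fun v => (h v)⁻¹) u)⁻¹))) :=
    isFiniteMeasure_withDensity_ofReal (hi _ _ hcD).2
  haveI : IsFiniteMeasure (m.withDensity (fun v => ENNReal.ofReal (l * p * h v ^ p))) :=
    isFiniteMeasure_withDensity_ofReal (hi _ _ hcp).2
  have mneg := (neg_cont (E := E)).measurable
  refine ext_even _ _ ⟨mneg, ?_⟩ ⟨mneg, ?_⟩ ?_
  · ext s hs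
    rw [Measure.map_apply mneg hs, Measure.map_apply hα (mneg hs), Measure.map_apply hα hs,
      withDensity_apply _ (hα (mneg hs)), withDensity_apply _ (hα hs),
      ← lintegral_indicator (hα (mneg hs)), ← lintegral_indicator (hα hs),
      ← sigma_neg.lintegral_comp (mD.indicator (hα hs))]
    refine lintegral_congr_ae ?_
    filter_upwards [sphere_diff hg d hd] with u hu
    have e1 : ((-u : sphere (0 : E) 1) : E) = -(u : E) := rfl
    have e2 : NN (fun v => (h v)⁻¹) (-(u : E)) = NN (fun v => (h v)⁻¹) (u : E) :=
      NN_neg (fun v => by simp only [hev]) _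
    have e3 : -α (-u) = α u := by
      refine max_unique hh hpos (sph_ne u) hu ?_ (hmax u)
      have e4 : ((-α (-u) : sphere (0 : E) 1) : E) = -(α (-u) : E) := rfl
      have h1 := hmax (-u)
      rw [e1, e2] at h1
      rw [hev, e4, h1, inner_neg_left, inner_neg_right]
    have e5 : α (-u) = -α u := by rw [← e3, neg_neg]
    have e6 : (u ∈ α ⁻¹' ((fun u : sphere (0 : E) 1 => -u) ⁻¹' s)) = (-u ∈ α ⁻¹' s) := by
      show (-α u ∈ s) = (α (-u) ∈ s)
      rw [e5]
    simp only [indicator, e1, e2]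
    by_cases hx : -u ∈ α ⁻¹' s
    · rw [if_pos hx, if_pos ((iff_of_eq e6).2 hx)]
    · rw [if_neg hx, if_neg fun hy => hx ((iff_of_eq e6).1 hy)]
  · ext s hs
    rw [Measure.map_apply mneg hs, withDensity_apply _ (mneg hs), withDensity_apply _ hs,
      ← lintegral_indicator (mneg hs), ← lintegral_indicator hs,
      ← hm.lintegral_comp (mp.indicator hs)]
    refine lintegral_congr fun v => ?_
    have e6 : (v ∈ (fun u : sphere (0 : E) 1 => -u) ⁻¹' s) = (-v ∈ s) := rfl
    simp only [indicator, hev]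
    by_cases hx : -v ∈ s
    · rw [if_pos hx, if_pos ((iff_of_eq e6).2 hx)]
    · rw [if_neg hx, if_neg fun hy => hx ((iff_of_eq e6).1 hy)]
  · intro ψ hψ hψe
    rw [integral_map hα.aemeasurable hψ.aestronglyMeasurable,
      integral_withDensity_eq_integral_toReal_smul mD (ae_of_all _ fun _ => ENNReal.ofReal_lt_top),
      integral_withDensity_eq_integral_toReal_smul mp (ae_of_all _ fun _ => ENNReal.ofReal_lt_top)]
    have := EL_even hh hpos hev hψ hψe d hd m hp hq hα hmax hJ
    rw [← integral_const_mul] at this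
    refine Eq.trans ?_ (this.trans ?_)
    · refine integral_congr_ae (ae_of_all _ fun u => ?_)
      show (ENNReal.ofReal _).toReal • _ = _
      rw [ENNReal.toReal_ofReal (hDnn u), smul_eq_mul, mul_assoc]
    · refine integral_congr_ae (ae_of_all _ fun v => ?_)
      show _ = (ENNReal.ofReal _).toReal • _
      rw [ENNReal.toReal_ofReal (hpnn v), smul_eq_mul]
      ring

end Sym
end GDM

set_option linter.all false

namespace GDM

section Core
open Module
variable {E : Type*} [NormedAddCommGroup E] [InnerProductSpace ℝ E] [FiniteDimensional ℝ E]
  [MeasurableSpace E] [BorelSpace E]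

lemma norm_gauge : IsGauge (fun x : E => ‖x‖) :=
  ⟨fun t ht x => by rw [norm_smul, Real.norm_of_nonneg ht], ⟨1, lipschitzWith_one_norm⟩,
    1, one_pos, fun x => by simp⟩

lemma wvol_ball (d : ℕ) (q : ℝ) [Nontrivial E] : wvol E d q (closedBall 0 1) ≠ 0 := by
  rw [wvol, Ne, withDensity_apply_eq_zero (meas_w d q)]
  intro h0
  have h1 : ball (0 : E) 1 \ {0} ⊆
      {x | ENNReal.ofReal (‖x‖ ^ (q - (d + 1)) * Real.exp (-‖x‖ ^ 2 / 2)) ≠ 0} ∩ closedBall 0 1 := by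
    rintro x ⟨hx, hx0⟩
    refine ⟨?_, ball_subset_closedBall hx⟩
    have hx0 : x ≠ 0 := hx0
    have : 0 < ‖x‖ := norm_pos_iff.2 hx0
    show ENNReal.ofReal _ ≠ 0
    rw [Ne, ENNReal.ofReal_eq_zero, not_le]
    positivity
  have h2 := measure_mono_null h1 h0
  rw [measure_diff_null (measure_singleton _)] at h2
  exact (measure_ball_pos volume (0 : E) one_pos).ne' h2

lemma frontier_gauge {g : E → ℝ} (hg : IsGauge g) : frontier {x | g x ≤ 1} = {x | g x = 1} := by
  refine Subset.antisymm (frontier_le_subset_eq hg.cont continuous_const) fun x hx => ?_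
  have hx : g x = 1 := hx
  have hcl : IsClosed {x | g x ≤ 1} := isClosed_le hg.cont continuous_const
  rw [hcl.frontier_eq]
  refine ⟨hx.le, fun hi => ?_⟩
  have hc : Continuous fun t : ℝ => t • x := by fun_prop
  have h1 : (fun t : ℝ => t • x) ⁻¹' {x | g x ≤ 1} ∈ 𝓝 (1 : ℝ) :=
    hc.continuousAt.preimage_mem_nhds (by simpa using mem_interior_iff_mem_nhds.1 hi)
  obtain ⟨ε, hε, hb⟩ := Metric.mem_nhds_iff.1 h1
  have h2 : (1 + ε / 2) ∈ ball (1 : ℝ) ε := by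
    rw [mem_ball, Real.dist_eq, add_sub_cancel_left, abs_of_pos (by positivity)]; linarith
  have h3 : g ((1 + ε / 2) • x) ≤ 1 := hb h2
  rw [hg.hom _ (by positivity), hx] at h3
  linarith

lemma normal_of_body {g : E → ℝ} (hg : IsGauge g) {x v : E} (hv : ‖v‖ = 1)
    (h : ∀ y, g y ≤ 1 → ⟪y, v⟫ ≤ ⟪x, v⟫) : IsNormal g x v := by
  refine ⟨hv, fun y => ?_⟩
  by_cases hy : y = 0
  · rw [hy, hg.zero]; simp
  · have gy := hg.pos_of_ne hy
    have := h ((g y)⁻¹ • y) (by rw [hg.hom _ (inv_pos.2 gy).le, inv_mul_cancel₀ gy.ne'])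
    rw [inner_smul_left] at this
    simp only [conj_trivial] at this
    rwa [inv_mul_le_iff₀ gy] at this

theorem core (d : ℕ) (hd : finrank ℝ E = d + 1) (m : Measure (sphere (0 : E) 1)) [IsFiniteMeasure m]
    (hm : MeasurePreserving (fun u : sphere (0 : E) 1 => -u) m m)
    (hmn : ∀ v : sphere (0 : E) 1, m {u | ⟪(v : E), (u : E)⟫ ≠ 0} ≠ 0) {p q : ℝ} (hp : 1 < p)
    (hq : 1 < q) :
    ∃ K : Set E, (IsCompact K ∧ Convex ℝ K ∧ (0 : E) ∈ interior K ∧ K = -K) ∧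
      ∃ κ : ℝ≥0∞, κ ≠ 0 ∧ κ ≠ ⊤ ∧
      ∀ ν : E → E, Measurable ν → (∀ x, ν x ∈ sphere (0 : E) 1) →
        (∀ x ∈ frontier K, ∀ y ∈ K, ⟪y, ν x⟫ ≤ ⟪x, ν x⟫) → ∀ η : Set E, MeasurableSet η →
          ∫⁻ x in frontier K ∩ ν ⁻¹' η,
            ENNReal.ofReal (⟪x, ν x⟫ ^ (1 - p) * ‖x‖ ^ (q - (d + 1)) * Real.exp (-‖x‖ ^ 2 / 2))
              ∂(μHE[d]) = κ * m (Subtype.val ⁻¹' η) := by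
  haveI : Nontrivial E := Module.nontrivial_of_finrank_pos (R := ℝ) (by omega)
  have hS : Nonempty (sphere (0 : E) 1) := (NormedSpace.sphere_nonempty.2 zero_le_one).to_subtype
  haveI := wvol_finite (E := E) d hd hq
  obtain ⟨h, hh, hpos, hev, hatt, l, hl, hJ⟩ := exists_max (wvol E d q)
    (withDensity_absolutelyContinuous _ _) (wvol_ball d q) m hmn hp hS
  have hc : Continuous fun v => (h v)⁻¹ := hh.inv₀ fun v => (hpos v).ne'
  have hwpos : ∀ v, 0 < (h v)⁻¹ := fun v => inv_pos.2 (hpos v)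
  have hg := NN_gauge hc hwpos
  have hK := wulff_eq hh hpos
  have hp0 : 0 < p := by linarith
  refine ⟨wulff h, ⟨?_, ?_, ?_, ?_⟩, ENNReal.ofReal (l * p), ?_, ENNReal.ofReal_ne_top, ?_⟩
  · obtain ⟨v1, -, hv1⟩ := isCompact_univ.exists_isMaxOn (univ_nonempty (α := sphere (0 : E) 1))
      hh.continuousOn
    exact (isCompact_closedBall (0 : E) (h v1)).of_isClosed_subset (wulff_closed h)
      (wulff_bdd (hpos v1).le fun v => hv1 (mem_univ v))
  · intro x hx y hy a b ha hb hab v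
    rw [inner_add_left, inner_smul_left, inner_smul_left]
    simp only [conj_trivial]
    have h1 := hx v
    have h2 := hy v
    calc a * ⟪x, (v : E)⟫ + b * ⟪y, (v : E)⟫ ≤ a * h v + b * h v := by gcongr
      _ = h v := by rw [← add_mul, hab, one_mul]
  · rw [hK, mem_interior]
    refine ⟨{x | NN (fun v => (h v)⁻¹) x < 1}, fun x hx => ?_, isOpen_lt hg.cont continuous_const, ?_⟩
    · have hx : NN (fun v => (h v)⁻¹) x < 1 := hx
      exact hx.le
    · show NN (fun v => (h v)⁻¹) 0 < 1
      rw [hg.zero]; exact one_pos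
  · ext x
    rw [Set.mem_neg]
    exact ⟨wulff_neg hev, fun hx => by simpa using wulff_neg hev hx⟩
  · rw [Ne, ENNReal.ofReal_eq_zero, not_le]; positivity
  · intro ν hνm hνS hνn η hη
    have hfr : frontier (wulff h) = {x | NN (fun v => (h v)⁻¹) x = 1} := by
      rw [hK, frontier_gauge hg]
    have hν1 : ∀ x, ‖ν x‖ = 1 := fun x => by simpa using hνS x
    set g := NN (fun v => (h v)⁻¹) with hgdef
    have hN : ∀ x, g x = 1 → IsNormal g x (ν x) := fun x hx =>
      normal_of_body hg (hν1 x) fun y hy => hνn x (by rw [hfr]; exact hx) y (by rw [hK]; exact hy)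
    have hsupp : ∀ x, g x = 1 → ⟪x, ν x⟫ = h ⟨ν x, hνS x⟩ := by
      intro x hx
      have hxK : x ∈ wulff h := by rw [hK]; exact hx.le
      refine le_antisymm (hxK ⟨ν x, hνS x⟩) ?_
      obtain ⟨z, hz, hz1⟩ := hatt ⟨ν x, hνS x⟩
      rw [← hz1]
      exact hνn x (by rw [hfr]; exact hx) z hz
    have gp : ∀ u : sphere (0 : E) 1, 0 < g u := fun u => hg.pos_of_ne (sph_ne u)
    have g1 : ∀ u : sphere (0 : E) 1, g ((g u)⁻¹ • (u : E)) = 1 := fun u => by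
      rw [hg.hom _ (inv_pos.2 (gp u)).le, inv_mul_cancel₀ (gp u).ne']
    set α : sphere (0 : E) 1 → sphere (0 : E) 1 :=
      fun u => ⟨ν ((g u)⁻¹ • (u : E)), hνS _⟩ with hαdef
    have hα : Measurable α :=
      Measurable.subtype_mk (hνm.comp ((meas_retr hg).comp measurable_subtype_coe))
    have hαh : ∀ u : sphere (0 : E) 1, ⟪(g u)⁻¹ • (u : E), ν ((g u)⁻¹ • (u : E))⟫ = h (α u) :=
      fun u => hsupp _ (g1 u)
    have hmax : ∀ u : sphere (0 : E) 1, g u = ⟪(u : E), (α u : E)⟫ * (h (α u))⁻¹ := by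
      intro u
      rw [← div_eq_mul_inv, eq_div_iff (hpos _).ne', ← hαh u, inner_smul_left]
      simp only [conj_trivial]
      rw [mul_inv_cancel_left₀ (gp u).ne']
    have EL := EL_measure hh hpos hev d hd m hm hp hq hl hα hmax hJ
    have hgm := hg.cont.measurable
    have hDm : MeasurableSet {x | g x = 1} := measurableSet_eq_fun hgm measurable_const
    have hνη : MeasurableSet (ν ⁻¹' η) := hνm hη
    have hin : Measurable fun x => ⟪x, ν x⟫ := measurable_id.inner hνm
    -- the density on the cone measure
    set G : E → ℝ≥0∞ := (ν ⁻¹' η).indicator fun x =>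
      ENNReal.ofReal (⟪x, ν x⟫ ^ (-p) * (‖x‖ ^ (q - (d + 1)) * Real.exp (-‖x‖ ^ 2 / 2))) with hG
    have hGm : Measurable G := by
      refine Measurable.indicator ?_ hνη
      fun_prop
    have step1 : ∫⁻ x in frontier (wulff h) ∩ ν ⁻¹' η,
            ENNReal.ofReal (⟪x, ν x⟫ ^ (1 - p) * ‖x‖ ^ (q - (d + 1)) * Real.exp (-‖x‖ ^ 2 / 2))
              ∂(μHE[d]) = ∫⁻ x, G x ∂(coneM g d) := by
      rw [area_formula hg d hd hN hνm,
        lintegral_withDensity_eq_lintegral_mul _ hin.ennreal_ofReal hGm, hfr, inter_comm,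
        ← Measure.restrict_restrict hνη, ← lintegral_indicator hνη]
      refine setLIntegral_congr_fun hDm fun x hx => ?_
      have hx : g x = 1 := hx
      have hxp := (hN x hx).inner_pos hg
      by_cases hxη : x ∈ ν ⁻¹' η
      · simp only [hG, Pi.mul_apply, indicator_of_mem hxη]
        rw [← ENNReal.ofReal_mul hxp.le, ← mul_assoc, ← mul_assoc, Real.rpow_sub hxp, Real.rpow_one,
          Real.rpow_neg hxp.le, div_eq_mul_inv]
      · simp only [hG, Pi.mul_apply, indicator_of_notMem hxη, mul_zero]
    have hη' : MeasurableSet (Subtype.val ⁻¹' η : Set (sphere (0 : E) 1)) := measurable_subtype_coe hη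
    set H : sphere (0 : E) 1 → ℝ≥0∞ := (Subtype.val ⁻¹' η : Set (sphere (0 : E) 1)).indicator
      fun v => ENNReal.ofReal (h v ^ (-p)) with hH
    have hHm : Measurable H := by
      refine Measurable.indicator ?_ hη'
      have := hh.measurable
      fun_prop
    have hci : Continuous fun u : sphere (0 : E) 1 => (g (u : E))⁻¹ :=
      Continuous.inv₀ (hg.cont.comp continuous_subtype_val) fun u => (gp u).ne'
    have hcD : Continuous fun u : sphere (0 : E) 1 => phi q (g (u : E))⁻¹ * (g (u : E))⁻¹ :=
      ((phi_cont hq).comp hci).mul hci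
    have hcp : Continuous fun v => l * p * h v ^ p :=
      continuous_const.mul (hh.rpow_const fun v => Or.inr (by linarith))
    rw [step1, lint_coneM hg d hd hGm]
    have step2 : ∀ u : sphere (0 : E) 1,
        G ((g u)⁻¹ • (u : E)) * ENNReal.ofReal ((g u)⁻¹ ^ (d + 1)) =
          ((fun u : sphere (0 : E) 1 => ENNReal.ofReal (phi q (g (u : E))⁻¹ * (g (u : E))⁻¹)) *
            fun u => H (α u)) u := by
      intro u
      have ip := inv_pos.2 (gp u)
      by_cases hxη : ν ((g u)⁻¹ • (u : E)) ∈ η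
      · have a1 : ((g u)⁻¹ • (u : E)) ∈ ν ⁻¹' η := hxη
        have a2 : α u ∈ (Subtype.val ⁻¹' η : Set (sphere (0 : E) 1)) := hxη
        simp only [hG, hH, Pi.mul_apply, indicator_of_mem a1, indicator_of_mem a2]
        rw [hαh u, norm_smul, norm_sph, mul_one, Real.norm_of_nonneg ip.le,
          ← ENNReal.ofReal_mul (by have := hpos (α u); positivity),
          ← ENNReal.ofReal_mul (mul_nonneg (phi_nonneg ip.le) ip.le)]
        congr 1
        set ρ := (g (u : E))⁻¹
        have e1 : ρ ^ (q - (d + 1)) * ρ ^ (d + 1) = ρ ^ (q - 1) * ρ := by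
          have : ρ ^ (d + 1) = ρ ^ ((d : ℝ) + 1) := by
            rw [← Real.rpow_natCast]; push_cast; rfl
          rw [this, ← Real.rpow_add ip, ← Real.rpow_add_one ip.ne']
          congr 1; ring
        unfold phi
        linear_combination h (α u) ^ (-p) * Real.exp (-ρ ^ 2 / 2) * e1
      · have a1 : ((g u)⁻¹ • (u : E)) ∉ ν ⁻¹' η := hxη
        have a2 : α u ∉ (Subtype.val ⁻¹' η : Set (sphere (0 : E) 1)) := hxη
        simp only [hG, hH, Pi.mul_apply, indicator_of_notMem a1, indicator_of_notMem a2, mul_zero,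
          zero_mul]
    rw [lintegral_congr step2,
      ← lintegral_withDensity_eq_lintegral_mul _ hcD.measurable.ennreal_ofReal (g := fun u => H (α u)) (hHm.comp hα),
      ← lintegral_map hHm hα, EL,
      lintegral_withDensity_eq_lintegral_mul _ hcp.measurable.ennreal_ofReal hHm]
    rw [← lintegral_indicator_const hη']
    refine lintegral_congr fun v => ?_
    by_cases hv : v ∈ (Subtype.val ⁻¹' η : Set (sphere (0 : E) 1))
    · simp only [hH, Pi.mul_apply, indicator_of_mem hv]
      have := hpos v
      rw [← ENNReal.ofReal_mul (by positivity), mul_assoc, ← Real.rpow_add this]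
      simp
    · simp only [hH, Pi.mul_apply, indicator_of_notMem hv, mul_zero]

/-- `H^d` of the sphere minus a hyperplane is positive. -/
lemma HE_pos (d : ℕ) (hd : finrank ℝ E = d + 1) (v : sphere (0 : E) 1) :
    μHE[d] ({u : E | ⟪(v : E), u⟫ ≠ 0} ∩ sphere 0 1) ≠ 0 := by
  intro h0
  have hg := norm_gauge (E := E)
  have hop : IsOpen {u : E | ⟪(v : E), u⟫ ≠ 0} := isOpen_ne_fun (by fun_prop) continuous_const
  have hA := area_formula hg d hd (ν := id) (fun x hx => normal_of_body hg hx fun y hy => by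
    have hx : ‖x‖ = 1 := hx
    have h1 := real_inner_le_norm y x
    have : ⟪x, id x⟫ = 1 := by simp [real_inner_self_eq_norm_sq, hx]
    rw [this]
    simp only [id]
    rw [hx, mul_one] at h1
    exact h1.trans hy) measurable_id
  have h1 : coneM (fun x : E => ‖x‖) d {u : E | ⟪(v : E), u⟫ ≠ 0} = 0 := by
    rw [hA]
    refine withDensity_absolutelyContinuous _ _ ?_
    rw [Measure.restrict_apply hop.measurableSet]
    have : {x : E | ‖x‖ = 1} = sphere 0 1 := by ext x; simp
    rw [this]; exact h0
  rw [coneM, Measure.smul_apply, smul_eq_mul, Measure.map_apply (meas_retr hg) hop.measurableSet,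
    mul_eq_zero] at h1
  rcases h1 with h1 | h1
  · simp at h1
  rw [Measure.restrict_apply (meas_retr hg hop.measurableSet)] at h1
  have h2 : {u : E | ⟪(v : E), u⟫ ≠ 0} ∩ ball 0 1 ⊆
      (fun x : E => ‖x‖⁻¹ • x) ⁻¹' {u : E | ⟪(v : E), u⟫ ≠ 0} ∩ {x | 0 < ‖x‖ ∧ ‖x‖ < 1} := by
    rintro x ⟨hx, hx1⟩
    have hx : ⟪(v : E), x⟫ ≠ 0 := hx
    have hx0 : x ≠ 0 := by rintro rfl; simp at hx
    have hxp := norm_pos_iff.2 hx0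
    refine ⟨?_, hxp, by simpa using hx1⟩
    show ⟪(v : E), ‖x‖⁻¹ • x⟫ ≠ 0
    rw [inner_smul_right]
    exact mul_ne_zero (inv_pos.2 hxp).ne' hx
  have h3 := measure_mono_null h2 h1
  refine ((hop.inter isOpen_ball).measure_pos volume ⟨(1 / 2 : ℝ) • (v : E), ?_, ?_⟩).ne' h3
  · show ⟪(v : E), (1 / 2 : ℝ) • (v : E)⟫ ≠ 0
    rw [inner_smul_right, real_inner_self_eq_norm_sq, norm_sph]; norm_num
  · rw [mem_ball_zero_iff, norm_smul, norm_sph]; norm_num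

end Core
end GDM

theorem even_lp_gauss_dual_minkowski (n : ℕ) (hn : 2 ≤ n) (p q : ℝ) (hp : 1 < p) (hq : 1 < q)
    (μ : Measure (EuclideanSpace ℝ (Fin n))) (hμfin : IsFiniteMeasure μ) (hμne : μ ≠ 0)
    (f : EuclideanSpace ℝ (Fin n) → ℝ) (M₀ : ℝ) (hM₀ : 0 < M₀)
    (hμ : μ = (μH[(n : ℝ) - 1].restrict
      (sphere (0 : EuclideanSpace ℝ (Fin n)) 1)).withDensity (fun u => ENNReal.ofReal (f u)))
    (hfeven : ∀ u ∈ sphere (0 : EuclideanSpace ℝ (Fin n)) 1, f (-u) = f u)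
    (hfbound : ∀ u ∈ sphere (0 : EuclideanSpace ℝ (Fin n)) 1, 1 / M₀ ≤ f u ∧ f u ≤ M₀) :
    ∃ K : Set (EuclideanSpace ℝ (Fin n)),
      (IsCompact K ∧ Convex ℝ K ∧ (0 : EuclideanSpace ℝ (Fin n)) ∈ interior K ∧ K = -K) ∧
      ∀ ν : EuclideanSpace ℝ (Fin n) → EuclideanSpace ℝ (Fin n),
        Measurable ν →
        (∀ x, ν x ∈ sphere (0 : EuclideanSpace ℝ (Fin n)) 1) →
        (∀ x ∈ frontier K, ∀ y ∈ K, ⟪y, ν x⟫ ≤ ⟪x, ν x⟫) →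
          (0 < lpGaussDualCurv n p q K ν (sphere (0 : EuclideanSpace ℝ (Fin n)) 1) ∧
            lpGaussDualCurv n p q K ν (sphere (0 : EuclideanSpace ℝ (Fin n)) 1) < ⊤) ∧
          ∀ η : Set (EuclideanSpace ℝ (Fin n)),
            η ⊆ sphere (0 : EuclideanSpace ℝ (Fin n)) 1 → MeasurableSet η →
              μ η * lpGaussDualCurv n p q K ν (sphere (0 : EuclideanSpace ℝ (Fin n)) 1) =
                μ (sphere (0 : EuclideanSpace ℝ (Fin n)) 1) * lpGaussDualCurv n p q K ν η := by
  classical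
  obtain ⟨d, rfl⟩ : ∃ d, n = d + 1 := ⟨n - 1, by omega⟩
  have hdR : (((d + 1 : ℕ) : ℝ) - 1) = (d : ℝ) := by push_cast; ring
  have hfr : Module.finrank ℝ (EuclideanSpace ℝ (Fin (d + 1))) = d + 1 := by simp
  rw [hdR] at hμ
  set S := sphere (0 : EuclideanSpace ℝ (Fin (d + 1))) 1 with hS
  have hSm : MeasurableSet S := isClosed_sphere.measurableSet
  have hemb : MeasurableEmbedding (Subtype.val : S → EuclideanSpace ℝ (Fin (d + 1))) :=
    MeasurableEmbedding.subtype_coe hSm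
  have hμapp : ∀ A, MeasurableSet A → μ A = ∫⁻ u in A ∩ S, ENNReal.ofReal (f u) ∂(μH[(d : ℝ)]) := by
    intro A hA
    rw [hμ, withDensity_apply _ hA, Measure.restrict_restrict hA]
  have hμS : ∀ A, MeasurableSet A → μ (A ∩ S) = μ A := by
    intro A hA
    rw [hμapp _ (hA.inter hSm), hμapp _ hA, inter_assoc, inter_self]
  have hμneg : ∀ A, MeasurableSet A → μ (Neg.neg ⁻¹' A) = μ A := by
    intro A hA
    have hmp : MeasurePreserving (Neg.neg : EuclideanSpace ℝ (Fin (d + 1)) → _) μH[(d : ℝ)] μH[(d : ℝ)] :=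
      (IsometryEquiv.neg (EuclideanSpace ℝ (Fin (d + 1)))).measurePreserving_hausdorffMeasure _
    have he : MeasurableEmbedding (Neg.neg : EuclideanSpace ℝ (Fin (d + 1)) → _) :=
      (Homeomorph.neg _).measurableEmbedding
    rw [hμapp _ (measurable_neg hA), hμapp _ hA,
      ← hmp.setLIntegral_comp_preimage_emb he _ (A ∩ S)]
    have : Neg.neg ⁻¹' A ∩ S = Neg.neg ⁻¹' (A ∩ S) := by
      ext x; simp [hS]
    rw [← this]
    refine setLIntegral_congr_fun ((measurable_neg hA).inter hSm) fun u hu => ?_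
    simp only [hfeven u hu.2]
  set m : Measure S := μ.comap Subtype.val with hm
  have hmapp : ∀ A, m (Subtype.val ⁻¹' A) = μ (A ∩ S) := by
    intro A
    rw [hm, hemb.comap_apply, Subtype.image_preimage_coe, inter_comm]
  haveI : IsFiniteMeasure m := ⟨by
    have := hmapp univ
    rw [preimage_univ] at this
    rw [this]; exact measure_lt_top _ _⟩
  have hmp : MeasurePreserving (fun u : S => -u) m m := by
    refine ⟨by fun_prop, ?_⟩
    ext A hA
    obtain ⟨B, hB, rfl⟩ := hA
    rw [Measure.map_apply (by fun_prop) (measurable_subtype_coe hB)]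
    have : (fun u : S => -u) ⁻¹' (Subtype.val ⁻¹' B) = Subtype.val ⁻¹' (Neg.neg ⁻¹' B) := rfl
    rw [this, hmapp, hmapp, hμS _ (measurable_neg hB), hμS _ hB, hμneg _ hB]
  have haH : ∃ a : ℝ≥0∞, a ≠ 0 ∧ a ≠ ⊤ ∧
      (μHE[d] : Measure (EuclideanSpace ℝ (Fin (d + 1)))) = a • μH[(d : ℝ)] :=
    ⟨_, ENNReal.coe_ne_zero.2 (Measure.addHaarScalarFactor_volume_hausdorffMeasure_ne_zero d),
      ENNReal.coe_ne_top, rfl⟩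
  obtain ⟨a, ha0, hat, haE⟩ := haH
  have hmn : ∀ v : S, m {u | ⟪(v : EuclideanSpace ℝ (Fin (d + 1))), (u : EuclideanSpace ℝ (Fin (d + 1)))⟫ ≠ 0} ≠ 0 := by
    intro v h0
    have hAm : MeasurableSet {u : EuclideanSpace ℝ (Fin (d + 1)) | ⟪(v : EuclideanSpace ℝ (Fin (d + 1))), u⟫ ≠ 0} :=
      (isOpen_ne_fun (by fun_prop) continuous_const).measurableSet
    have h1 := GDM.HE_pos d hfr v
    apply h1
    have h2 := hmapp {u : EuclideanSpace ℝ (Fin (d + 1)) | ⟪(v : EuclideanSpace ℝ (Fin (d + 1))), u⟫ ≠ 0}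
    have h3 : m (Subtype.val ⁻¹' {u : EuclideanSpace ℝ (Fin (d + 1)) | ⟪(v : EuclideanSpace ℝ (Fin (d + 1))), u⟫ ≠ 0}) = 0 := h0
    rw [h3, hμS _ hAm, hμapp _ hAm] at h2
    have h4 : ENNReal.ofReal (1 / M₀) * μH[(d : ℝ)] ({u : EuclideanSpace ℝ (Fin (d + 1)) | ⟪(v : EuclideanSpace ℝ (Fin (d + 1))), u⟫ ≠ 0} ∩ S) ≤ 0 := by
      rw [h2, ← setLIntegral_const]
      exact setLIntegral_mono' (hAm.inter hSm) fun u hu => ENNReal.ofReal_le_ofReal (hfbound u hu.2).1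
    have h5 := nonpos_iff_eq_zero.1 h4
    rw [mul_eq_zero, ENNReal.ofReal_eq_zero, not_le.2 (by positivity) |> eq_false, false_or] at h5
    rw [haE, Measure.smul_apply, h5, smul_zero]
  obtain ⟨K, hK, κ, hκ0, hκt, hmain⟩ := GDM.core d hfr m hmp hmn hp hq
  refine ⟨K, hK, fun ν hνm hνS hνn => ?_⟩
  have key : ∀ η, MeasurableSet η → η ⊆ S → a * lpGaussDualCurv (d + 1) p q K ν η = κ * μ η := by
    intro η hη hηS
    have h1 := hmain ν hνm hνS hνn η hη
    rw [haE, Measure.restrict_smul, lintegral_smul_measure, hmapp, hμS _ hη, smul_eq_mul] at h1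
    rw [← h1, lpGaussDualCurv, hdR]
    push_cast
    rfl
  have kS := key S hSm subset_rfl
  have hμS0 : μ S ≠ 0 := by
    have := hμS univ MeasurableSet.univ
    rw [univ_inter] at this
    rw [this]
    exact fun h => hμne (Measure.measure_univ_eq_zero.1 h)
  have hμSt : μ S ≠ ⊤ := measure_ne_top _ _
  refine ⟨⟨?_, ?_⟩, fun η hηS hη => ?_⟩
  · rw [pos_iff_ne_zero]
    intro h0
    rw [h0, mul_zero, eq_comm, mul_eq_zero] at kS
    exact kS.elim hκ0 hμS0
  · rw [lt_top_iff_ne_top]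
    intro h0
    rw [h0, ENNReal.mul_top ha0] at kS
    exact ENNReal.mul_ne_top hκt hμSt kS.symm
  · have kη := key η hη hηS
    refine (ENNReal.mul_right_inj ha0 hat).1 ?_
    rw [mul_left_comm, kS, mul_left_comm a, kη]
    ring
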